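/- Let (f_k)_k be a block sequence in c_00(ℕ) with ‖f_k‖_* ≤ 1 for all k, viewed as elements of the unit ball of X_iw^*. Then for every ε > 0 there exists an infinite set L ⊆ ℕ such that for every j_0 ∈ ℕ and every finite F ⊆ L for which (f_k)_{k∈F} is S_{n_{j_0}}-admissible, one has ‖Σ_{k∈F} f_k‖_* ≤ 2·m_{j_0} + ε. -/

import Mathlib

/-!
Why the estimate holds. By Hahn-Banach in finitely many coordinates, each `f_k` is, up to a
summably small error, a convex combination `c_k` of functionals of `W_iw` supported in
`supp f_k` (`exists_convex_approx_evalAt`; `W_iw` is closed under restrictions).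

A functional of finite weight `w` is `1/w` times a very fast growing sum. Detach its first
component `g`: it carries a factor `1/w ≤ 1/2`, and every component of the remainder has weight
larger than a coordinate of the support of the functional. Hence remainders of one and the
same weight `w`, taken from far-apart blocks that are `S_{n_{j₀}}`-admissible, have components
which form a single very fast growing family, admissible for the sum of the two Schreier
indices; dividing their sum by `m_{j₀}` gives an element of `W_iw`, so the remainders sum to at most
`m_{j₀}` on the unit ball (`rest_combine`, `rest_sum_le`). The same applies to functionals
whose own weights grow very fast along the sequence; nothing has to be detached from them.

The weights occurring in `c_k` form a probability distribution. After passing to a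
subsequence these distributions converge weight by weight, the rest of the mass escaping to
infinite weight (`exists_subsequence`), so the sum over `k` is nearly an average, over a fixed
distribution, of the two kinds of sums above (`averaging`). This yields `one_step`:
`c_k = b_k + c'_k / 2`, where the `b_k` satisfy the upper estimate with constant `m_{j₀} + δ`
and `c'_k` is again a convex combination of functionals of `W_iw`. Iterating
(`exists_iteration`) and diagonalizing (`diagonal_sum_le`) gives
`(1 + 1/2 + 1/4 + ⋯) (m_{j₀} + δ)` plus a small error, that is, `2 m_{j₀} + ε`.
-/

open Filter Topology
open scoped ENNReal

noncomputable section

/-! ### Abstract Banach space notions -/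

section Abstract

variable {X : Type*} [NormedAddCommGroup X] [NormedSpace ℝ X]

/-- A sequence is normalized if every term has norm one. -/
def Normalized (x : ℕ → X) : Prop := ∀ i, ‖x i‖ = 1

/-- A sequence is weakly null if it tends to `0` in the weak topology. -/
def WeaklyNull (x : ℕ → X) : Prop :=
  ∀ f : X →L[ℝ] ℝ, Tendsto (fun i => f (x i)) atTop (𝓝 (0 : ℝ))

end Abstract

/-- The ℓ₁ norm of finite coefficient vectors (the norms of finite linear
combinations of the unit vector basis of ℓ₁). -/
def l1Norm : ∀ m : ℕ, (Fin m → ℝ) → ℝ := fun _ a => ∑ i, |a i|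

/-- The sup norm of finite coefficient vectors (the norms of finite linear
combinations of the unit vector basis of c₀). -/
def supNorm : ∀ m : ℕ, (Fin m → ℝ) → ℝ := fun _ a => ⨆ i, |a i|

/-- The ℓ_p norm of finite coefficient vectors, `1 ≤ p < ∞`. -/
def lpNormFin (p : ℝ) : ∀ m : ℕ, (Fin m → ℝ) → ℝ := fun _ a => (∑ i, |a i| ^ p) ^ (1 / p)

/-- The ℓ_q norms of finite coefficient vectors, `q ∈ [1,∞]`, where `q = ∞`
corresponds to `c₀`. -/
def finLqNorm (q : ℝ≥0∞) : ∀ m : ℕ, (Fin m → ℝ) → ℝ := fun m a =>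
  if q = ⊤ then supNorm m a else lpNormFin q.toReal m a

/-- The family of seminorms `ν` (of finite combinations of a sequence in a seminormed
space) is `C`-equivalent to the family `μ`:  there are `A B > 0` with `A * B ≤ C` and
`(1/A) * μ ≤ ν ≤ B * μ`. -/
def NormFamEquiv (C : ℝ) (μ ν : ∀ m : ℕ, (Fin m → ℝ) → ℝ) : Prop :=
  ∃ A B : ℝ, 0 < A ∧ 0 < B ∧ A * B ≤ C ∧
    ∀ (m : ℕ) (a : Fin m → ℝ), (1 / A) * μ m a ≤ ν m a ∧ ν m a ≤ B * μ m a

section Abstract2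

variable {X : Type*} [NormedAddCommGroup X] [NormedSpace ℝ X]

/-- The sequence `x` generates the spreading model whose finite-combination
seminorms are given by the family `ν`. -/
def GeneratesSpreadingModel (x : ℕ → X) (ν : ∀ m : ℕ, (Fin m → ℝ) → ℝ) : Prop :=
  ∀ (m : ℕ) (a : Fin m → ℝ), ∀ ε > (0 : ℝ), ∃ N : ℕ, ∀ j : Fin m → ℕ,
    StrictMono j → (∀ i, N ≤ j i) → |‖∑ i, a i • x (j i)‖ - ν m a| < ε

/-- The array of sequences `A` (row `A i` is the `i`-th sequence) generates the
asymptotic model whose finite-combination seminorms are given by `ν`. -/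
def GeneratesAsymptoticModel (A : ℕ → ℕ → X) (ν : ∀ l : ℕ, (Fin l → ℝ) → ℝ) : Prop :=
  ∀ (l : ℕ) (a : Fin l → ℝ), ∀ ε > (0 : ℝ), ∃ N : ℕ, ∀ j : Fin l → ℕ,
    StrictMono j → (∀ i, N ≤ j i) → |‖∑ i, a i • A i (j i)‖ - ν l a| < ε

/-- `e` is a Schauder basis of `X`. -/
def IsSchauderBasis (e : ℕ → X) : Prop :=
  ∀ x : X, ∃! a : ℕ → ℝ,
    Tendsto (fun n => ∑ i ∈ Finset.range n, a i • e i) atTop (𝓝 x)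

/-- The basis `e` is 1-unconditional. -/
def OneUnconditional (e : ℕ → X) : Prop :=
  ∀ (F : Finset ℕ) (a ε : ℕ → ℝ), (∀ i, ε i = 1 ∨ ε i = -1) →
    ‖∑ i ∈ F, (ε i * a i) • e i‖ = ‖∑ i ∈ F, a i • e i‖

/-- `x` is a block sequence with respect to the basis `e`. -/
def IsBlockSeq (e : ℕ → X) (x : ℕ → X) : Prop :=
  ∃ F : ℕ → Finset ℕ, (∀ k, (F k).Nonempty) ∧
    (∀ k l : ℕ, k < l → ∀ i ∈ F k, ∀ j ∈ F l, i < j) ∧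
    ∀ k, x k ≠ 0 ∧ x k ∈ Submodule.span ℝ (e '' ↑(F k))

/-- `z` is a finite block sequence with respect to the basis `e`. -/
def IsFinBlockSeq (e : ℕ → X) {n : ℕ} (z : Fin n → X) : Prop :=
  ∃ F : Fin n → Finset ℕ, (∀ k, (F k).Nonempty) ∧
    (∀ k l : Fin n, k < l → ∀ i ∈ F k, ∀ j ∈ F l, i < j) ∧
    ∀ k, z k ≠ 0 ∧ z k ∈ Submodule.span ℝ (e '' ↑(F k))

/-- `Y` is a block subspace of `X` (with respect to the basis `e`): the closed
linear span of an infinite normalized block sequence. -/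
def IsBlockSubspace (e : ℕ → X) (Y : Set X) : Prop :=
  ∃ y : ℕ → X, IsBlockSeq e y ∧ Normalized y ∧
    Y = closure (↑(Submodule.span ℝ (Set.range y)) : Set X)

/-- The finite sequence `z` is `C`-equivalent to a finite basic sequence whose
finite-combination norms are given by `μ`. -/
def FinSeqEquiv (C : ℝ) {n : ℕ} (μ : (Fin n → ℝ) → ℝ) (z : Fin n → X) : Prop :=
  ∃ A B : ℝ, 0 < A ∧ 0 < B ∧ A * B ≤ C ∧
    ∀ a : Fin n → ℝ, (1 / A) * μ a ≤ ‖∑ i, a i • z i‖ ∧ ‖∑ i, a i • z i‖ ≤ B * μ a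

/-- The finite basic sequence with combination norms `μ` is block representable
in `Y ⊆ X`. -/
def BlockRepresentableIn (e : ℕ → X) (Y : Set X) {n : ℕ} (μ : (Fin n → ℝ) → ℝ) : Prop :=
  ∀ ε > (0 : ℝ), ∃ z : Fin n → X, (∀ i, z i ∈ Y) ∧ IsFinBlockSeq e z ∧
    FinSeqEquiv (1 + ε) μ z

/-- `x` is a (Schauder) basic sequence. -/
def IsBasicSeq (x : ℕ → X) : Prop :=
  (∀ i, x i ≠ 0) ∧ ∃ K : ℝ, 0 < K ∧ ∀ (a : ℕ → ℝ) (m n : ℕ), m ≤ n →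
    ‖∑ i ∈ Finset.range m, a i • x i‖ ≤ K * ‖∑ i ∈ Finset.range n, a i • x i‖

end Abstract2

/-- A plegma of `k` strictly increasing `l`-tuples of naturals. -/
def IsPlegma (k l : ℕ) (s : Fin k → Fin l → ℕ) : Prop :=
  (∀ i, StrictMono (s i)) ∧
  (∀ i₁ i₂ : Fin k, ∀ j₁ j₂ : Fin l, j₁ < j₂ → s i₁ j₁ < s i₂ j₂) ∧
  (∀ i₁ i₂ : Fin k, i₁ < i₂ → ∀ j, s i₁ j ≤ s i₂ j)

/-- A strict plegma: a plegma with pairwise disjoint tuples. -/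
def IsStrictPlegma (k l : ℕ) (s : Fin k → Fin l → ℕ) : Prop :=
  IsPlegma k l s ∧ ∀ i₁ i₂ : Fin k, i₁ ≠ i₂ → ∀ j₁ j₂ : Fin l, s i₁ j₁ ≠ s i₂ j₂

section Abstract3

variable {X : Type*} [NormedAddCommGroup X] [NormedSpace ℝ X]

/-- The `l`-array `x` generates the joint spreading model with finite-combination
seminorms `ν`. -/
def GeneratesJSM (l : ℕ) (x : Fin l → ℕ → X)
    (ν : ∀ k : ℕ, (Fin l → Fin k → ℝ) → ℝ) : Prop :=
  ∀ (k : ℕ) (a : Fin l → Fin k → ℝ), ∀ ε > (0 : ℝ), ∃ N : ℕ,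
    ∀ s : Fin l → Fin k → ℕ, IsStrictPlegma l k s → (∀ i j, N ≤ s i j) →
      |‖∑ i, ∑ j, a i j • x i (s i j)‖ - ν k a| < ε

/-- `X` admits a unique joint spreading model with respect to the family of
sequences `F`. -/
def UniqueJSM (F : Set (ℕ → X)) : Prop :=
  ∃ C : ℝ, 1 ≤ C ∧ ∀ (l : ℕ) (x y : Fin l → ℕ → X),
    (∀ i, x i ∈ F) → (∀ i, y i ∈ F) →
    ∀ ν μ, GeneratesJSM l x ν → GeneratesJSM l y μ →
      ∃ A B : ℝ, 0 < A ∧ 0 < B ∧ A * B ≤ C ∧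
        ∀ (k : ℕ) (a : Fin l → Fin k → ℝ),
          (1 / A) * μ k a ≤ ν k a ∧ ν k a ≤ B * μ k a

/-- `X` admits a unique asymptotic model with respect to the family of
sequences `F`. -/
def UniqueAM (F : Set (ℕ → X)) : Prop :=
  ∀ x y : ℕ → ℕ → X, (∀ i, x i ∈ F) → (∀ i, y i ∈ F) →
    ∀ ν μ, GeneratesAsymptoticModel x ν → GeneratesAsymptoticModel y μ →
      ∃ C : ℝ, 1 ≤ C ∧ NormFamEquiv C μ ν

end Abstract3

/-- A bundled Banach-space candidate. -/
structure BanachPkg : Type 1 where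
  X : Type
  [grp : NormedAddCommGroup X]
  [mod : NormedSpace ℝ X]

attribute [instance] BanachPkg.grp BanachPkg.mod

/-! ### c₀₀ and the norming sets -/

/-- The finitely supported real sequences. -/
abbrev c00 : Type := ℕ →₀ ℝ

/-- Minimum of the support (0 for the zero vector). -/
def minSupp (x : c00) : ℕ := if h : x.support.Nonempty then x.support.min' h else 0

/-- Maximum of the support (0 for the zero vector). -/
def maxSupp (x : c00) : ℕ := if h : x.support.Nonempty then x.support.max' h else 0

/-- Minimum of a finset of naturals (0 if empty). -/
def finsetMin (F : Finset ℕ) : ℕ := if h : F.Nonempty then F.min' h else 0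

/-- `x < y` as successive (block) vectors. -/
def Blocks (x y : c00) : Prop := maxSupp x < minSupp y

/-- The Schreier families. -/
def Schreier : ℕ → Set (Finset ℕ)
  | 0 => {F | ∃ i : ℕ, F = {i}}
  | n + 1 => {F | ∃ (d : ℕ) (G : Fin d → Finset ℕ),
      (∀ k, G k ∈ Schreier n) ∧
      (∀ k l : Fin d, k < l → ∀ i ∈ G k, ∀ j ∈ G l, i < j) ∧
      (∀ i ∈ F, d ≤ i) ∧ F = Finset.univ.biUnion G}

/-- The family `A_m` of sets of cardinality at most `m`. -/
def SchreierA (m : ℕ) : Set (Finset ℕ) := {F | F.card ≤ m}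

/-- The operation `A * B` on families of finite sets. -/
def famStar (A B : Set (Finset ℕ)) : Set (Finset ℕ) :=
  {F | ∃ (d : ℕ) (G : Fin d → Finset ℕ),
      (∀ k, G k ∈ B) ∧ (∀ k, (G k).Nonempty) ∧
      (∀ k l : Fin d, k < l → ∀ i ∈ G k, ∀ j ∈ G l, i < j) ∧
      (Finset.univ.image fun k => finsetMin (G k)) ∈ A ∧ F = Finset.univ.biUnion G}

/-- A finite block sequence in `c00` is `S`-admissible. -/
def Admissible (S : Set (Finset ℕ)) {d : ℕ} (f : Fin d → c00) : Prop :=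
  (∀ q, (f q).support.Nonempty) ∧
  (∀ q r : Fin d, q < r → Blocks (f q) (f r)) ∧
  (Finset.univ.image fun q => minSupp (f q)) ∈ S

/-- The two fixed sequences `(m_j)`, `(n_j)` (indexed here starting at `0`, so that
`m 0` plays the role of `m_1` etc.) together with their growth conditions. -/
structure IWParams where
  m : ℕ → ℕ
  n : ℕ → ℕ
  m_mono : StrictMono m
  n_mono : StrictMono n
  m_first : m 0 = 2
  n_first : n 0 = 1
  growth_exp : ∀ C : ℝ, 1 < C → Tendsto (fun j => C ^ (n j) / (m j : ℝ)) atTop atTop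
  growth_ratio : Tendsto (fun j => (m j : ℝ) / (m (j + 1) : ℝ)) atTop (𝓝 0)
  growth_sum : ∀ (l : ℕ) (js : Fin l → ℕ) (j : ℕ), (∀ i, js i ≤ j) →
    (∏ i, m (js i)) < m (j + 1) ^ 2 → (∑ i, n (js i)) + 1 < n (j + 1)

/-- The action of a functional `f ∈ c00` on a vector `x ∈ c00`. -/
def evalPair (f x : c00) : ℝ := f.sum fun i a => a * x i

/-- The norming set `W_iw`, together with admissible weights: `WIW P f w` means
that `f` belongs to the norming set and `w` is a weight of (one representation of)
`f`; the unit functionals `±e_i^*` have weight `∞`. -/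
inductive WIW (P : IWParams) : c00 → ℕ∞ → Prop
  | unit (i : ℕ) (s : ℝ) (hs : s = 1 ∨ s = -1) : WIW P (Finsupp.single i s) ⊤
  | op (l : ℕ) (hl : 0 < l) (js : Fin l → ℕ) (d : ℕ) (f : Fin d → c00) (w : Fin d → ℕ∞)
      (hf : ∀ q, WIW P (f q) (w q))
      (hadm : Admissible (Schreier (∑ i, P.n (js i))) f)
      (hvfg : ∀ q r : Fin d, (q : ℕ) + 1 = (r : ℕ) → (maxSupp (f q) : ℕ∞) < w r) :
      WIW P (((∏ i, P.m (js i) : ℕ) : ℝ)⁻¹ • ∑ q, f q) ((∏ i, P.m (js i) : ℕ) : ℕ∞)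

/-- Membership in the norming set `W_iw`. -/
def memWIW (P : IWParams) (f : c00) : Prop := ∃ w, WIW P f w

/-- The norm of `X_iw`, on finitely supported vectors. -/
def iwNorm (P : IWParams) (x : c00) : ℝ :=
  sSup {r | ∃ f, memWIW P f ∧ r = evalPair f x}

/-- The dual norm of a finitely supported functional, as an element of `X_iw^*`. -/
def iwDualNorm (P : IWParams) (f : c00) : ℝ :=
  sSup {r | ∃ x : c00, iwNorm P x ≤ 1 ∧ r = evalPair f x}

/-- The auxiliary norming set `W_aux^N` together with admissible weights. -/
inductive WAux (P : IWParams) (N : ℕ) : c00 → ℕ∞ → Prop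
  | unit (i : ℕ) (s : ℝ) (hs : s = 1 ∨ s = -1) : WAux P N (Finsupp.single i s) ⊤
  | op (l : ℕ) (hl : 0 < l) (js : Fin l → ℕ) (d : ℕ) (f : Fin d → c00) (w : Fin d → ℕ∞)
      (hf : ∀ q, WAux P N (f q) (w q))
      (hadm : Admissible (famStar (Schreier (∑ i, P.n (js i))) (SchreierA 3)) f)
      (hlarge : ∀ q : Fin d, 0 < (q : ℕ) → (N : ℕ∞) < w q) :
      WAux P N (((∏ i, P.m (js i) : ℕ) : ℝ)⁻¹ • ∑ q, f q) ((∏ i, P.m (js i) : ℕ) : ℕ∞)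

/-- An `(n, ε)` basic special convex combination. -/
def IsBasicSCC (n : ℕ) (ε : ℝ) (x : c00) : Prop :=
  ∃ F : Finset ℕ, x.support ⊆ F ∧ F ∈ Schreier n ∧ (∀ i, 0 ≤ x i) ∧
    (∑ i ∈ F, x i) = 1 ∧ ∀ G ⊆ F, G ∈ Schreier (n - 1) → (∑ i ∈ G, x i) < ε

/-- An `(n, ε)` special convex combination `∑ c i • x i`. -/
def IsSCC (n : ℕ) (ε : ℝ) {m : ℕ} (c : Fin m → ℝ) (x : Fin m → c00) : Prop :=
  (∀ i, (x i).support.Nonempty) ∧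
  (∀ i j : Fin m, i < j → Blocks (x i) (x j)) ∧
  IsBasicSCC n ε (∑ i, c i • Finsupp.single (minSupp (x i)) (1 : ℝ))

/-- `x` generates, with respect to the norm function `Nrm` on `c00`, the spreading
model whose finite-combination seminorms are `ν`. -/
def GeneratesSMwith (Nrm : c00 → ℝ) (x : ℕ → c00) (ν : ∀ m : ℕ, (Fin m → ℝ) → ℝ) : Prop :=
  ∀ (m : ℕ) (a : Fin m → ℝ), ∀ ε > (0 : ℝ), ∃ N : ℕ, ∀ j : Fin m → ℕ,
    StrictMono j → (∀ i, N ≤ j i) → |Nrm (∑ i, a i • x (j i)) - ν m a| < ε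

/-- The array `A` generates, with respect to the norm function `Nrm` on `c00`, the
asymptotic model whose finite-combination seminorms are `ν`. -/
def GeneratesAMwith (Nrm : c00 → ℝ) (A : ℕ → ℕ → c00) (ν : ∀ l : ℕ, (Fin l → ℝ) → ℝ) : Prop :=
  ∀ (l : ℕ) (a : Fin l → ℝ), ∀ ε > (0 : ℝ), ∃ N : ℕ, ∀ j : Fin l → ℕ,
    StrictMono j → (∀ i, N ≤ j i) → |Nrm (∑ i, a i • A i (j i)) - ν l a| < ε

/-- A normalized block sequence in `c00` with respect to a norm function. -/
def IsNormBlockSeq (Nrm : c00 → ℝ) (y : ℕ → c00) : Prop :=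
  (∀ k, (y k).support.Nonempty) ∧ (∀ k, Blocks (y k) (y (k + 1))) ∧ ∀ k, Nrm (y k) = 1

/-- A `(C, (j_i)_{i ∈ I})` rapidly increasing sequence, `I` a (finite) interval. -/
def IsRIS (P : IWParams) (C : ℝ) (I : Finset ℕ) (j : ℕ → ℕ) (x : ℕ → c00) : Prop :=
  (∀ a ∈ I, ∀ b ∈ I, ∀ c : ℕ, a ≤ c → c ≤ b → c ∈ I) ∧
  (∀ a ∈ I, ∀ b ∈ I, a < b → j a < j b) ∧
  (∀ i ∈ I, (x i).support.Nonempty) ∧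
  (∀ a ∈ I, ∀ b ∈ I, a < b → Blocks (x a) (x b)) ∧
  (∀ i ∈ I, iwNorm P (x i) ≤ C) ∧
  (∀ i ∈ I, ∀ i' ∈ I, i' + 1 = i → (maxSupp (x i') : ℝ) < Real.sqrt (P.m (j i))) ∧
  (∀ i ∈ I, ∀ f w, WIW P f w → w < ((P.m (j i) : ℕ) : ℕ∞) →
    |evalPair f (x i)| ≤ C / (w.toNat : ℝ))

/-- An infinite `(C, (j_i)_i)` rapidly increasing sequence. -/
def IsRISNat (P : IWParams) (C : ℝ) (j : ℕ → ℕ) (x : ℕ → c00) : Prop :=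
  StrictMono j ∧ (∀ i, (x i).support.Nonempty) ∧ (∀ i, Blocks (x i) (x (i + 1))) ∧
  (∀ i, iwNorm P (x i) ≤ C) ∧
  (∀ i, (maxSupp (x i) : ℝ) < Real.sqrt (P.m (j (i + 1)))) ∧
  (∀ i, ∀ f w, WIW P f w → w < ((P.m (j i) : ℕ) : ℕ∞) →
    |evalPair f (x i)| ≤ C / (w.toNat : ℝ))

/-- `X` together with the basis `e` is a realization of the space `X_iw`: a Banach
space in which `c00` sits isometrically (w.r.t. `iwNorm`) and densely. -/
structure IsIWRealization (P : IWParams) (X : Type*) [NormedAddCommGroup X]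
    [NormedSpace ℝ X] (e : ℕ → X) : Prop where
  complete : CompleteSpace X
  dense : DenseRange fun a : c00 => ∑ i ∈ a.support, a i • e i
  norm_eq : ∀ a : c00, ‖∑ i ∈ a.support, a i • e i‖ = iwNorm P a

/-- The conjugate exponent of `p`. -/
def conjExp (p : ℝ) : ℝ := p / (p - 1)

/-- The norming set `W_iw^p` together with admissible weights. -/
inductive WIWp (P : IWParams) (p : ℝ) : c00 → ℕ∞ → Prop
  | unit (i : ℕ) (s : ℝ) (hs : s = 1 ∨ s = -1) : WIWp P p (Finsupp.single i s) ⊤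
  | op (l : ℕ) (hl : 0 < l) (js : Fin l → ℕ) (d : ℕ) (f : Fin d → c00) (w : Fin d → ℕ∞)
      (lam : Fin d → ℝ) (hlam : (∑ q, |lam q| ^ conjExp p) ≤ 1)
      (hf : ∀ q, WIWp P p (f q) (w q))
      (hadm : Admissible (Schreier (∑ i, P.n (js i))) f)
      (hvfg : ∀ q r : Fin d, (q : ℕ) + 1 = (r : ℕ) → (maxSupp (f q) : ℕ∞) < w r) :
      WIWp P p (((∏ i, P.m (js i) : ℕ) : ℝ)⁻¹ • ∑ q, lam q • f q)
        ((∏ i, P.m (js i) : ℕ) : ℕ∞)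

/-- The norm of `X_iw^p` on finitely supported vectors. -/
def iwpNorm (P : IWParams) (p : ℝ) (x : c00) : ℝ :=
  sSup {r | ∃ f, (∃ w, WIWp P p f w) ∧ r = evalPair f x}

/-- The norming set of the space `X̃_iw`, together with admissible weights. -/
inductive WT (P : IWParams) : c00 → ℕ∞ → Prop
  | unit (i : ℕ) (s : ℝ) (hs : s = 1 ∨ s = -1) : WT P (Finsupp.single i s) ⊤
  | op (j : ℕ) (d : ℕ) (f : Fin d → c00) (w : Fin d → ℕ∞)
      (hf : ∀ q, WT P (f q) (w q))
      (hadm : Admissible (Schreier (P.n j)) f)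
      (hvfg : ∀ q r : Fin d, (q : ℕ) + 1 = (r : ℕ) → (maxSupp (f q) : ℕ∞) < w r) :
      WT P ((P.m j : ℝ)⁻¹ • ∑ q, f q) ((P.m j : ℕ) : ℕ∞)

/-- The norm of `X̃_iw` on finitely supported vectors. -/
def tNorm (P : IWParams) (x : c00) : ℝ :=
  sSup {r | ∃ f, (∃ w, WT P f w) ∧ r = evalPair f x}

end

/-! ### Supports -/

lemma minSupp_le {x : c00} {i : ℕ} (hi : i ∈ x.support) : minSupp x ≤ i := by
  have h : x.support.Nonempty := ⟨i, hi⟩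
  rw [minSupp, dif_pos h]
  exact Finset.min'_le _ _ hi

lemma le_maxSupp {x : c00} {i : ℕ} (hi : i ∈ x.support) : i ≤ maxSupp x := by
  have h : x.support.Nonempty := ⟨i, hi⟩
  rw [maxSupp, dif_pos h]
  exact Finset.le_max' _ _ hi

lemma minSupp_mem {x : c00} (h : x.support.Nonempty) : minSupp x ∈ x.support := by
  rw [minSupp, dif_pos h]
  exact Finset.min'_mem _ _

lemma maxSupp_mem {x : c00} (h : x.support.Nonempty) : maxSupp x ∈ x.support := by
  rw [maxSupp, dif_pos h]
  exact Finset.max'_mem _ _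

lemma minSupp_le_maxSupp (x : c00) : minSupp x ≤ maxSupp x := by
  by_cases h : x.support.Nonempty
  · exact minSupp_le (maxSupp_mem h)
  · simp [minSupp, maxSupp, h]

lemma blocks_of_lt {x y : c00} (hx : x.support.Nonempty) (hy : y.support.Nonempty)
    (h : ∀ i ∈ x.support, ∀ j ∈ y.support, i < j) : Blocks x y :=
  h _ (maxSupp_mem hx) _ (minSupp_mem hy)

lemma Blocks.lt {x y : c00} (h : Blocks x y) {i j : ℕ} (hi : i ∈ x.support)
    (hj : j ∈ y.support) : i < j :=
  lt_of_le_of_lt (le_maxSupp hi) (lt_of_lt_of_le h (minSupp_le hj))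

lemma Blocks.minSupp_lt {x y : c00} (h : Blocks x y) : minSupp x < minSupp y :=
  lt_of_le_of_lt (minSupp_le_maxSupp x) h

/-! ### Schreier families -/

/-- The Schreier family `S_n` with the empty set adjoined (which only matters for `n = 0`). -/
def SchreierE (n : ℕ) (F : Finset ℕ) : Prop := F = ∅ ∨ F ∈ Schreier n

lemma empty_mem_schreier_succ (n : ℕ) : (∅ : Finset ℕ) ∈ Schreier (n + 1) :=
  ⟨0, fun k => k.elim0, fun k => k.elim0, fun k => k.elim0, by simp, by simp⟩

lemma SchreierE.mem {n : ℕ} (hn : 0 < n) {F : Finset ℕ} (h : SchreierE n F) :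
    F ∈ Schreier n := by
  obtain ⟨k, rfl⟩ : ∃ k, n = k + 1 := ⟨n - 1, by omega⟩
  rcases h with rfl | h
  · exact empty_mem_schreier_succ k
  · exact h

lemma pos_of_mem_schreier {n : ℕ} (hn : 0 < n) {F : Finset ℕ} (h : F ∈ Schreier n) {i : ℕ}
    (hi : i ∈ F) : 0 < i := by
  obtain ⟨k, rfl⟩ : ∃ k, n = k + 1 := ⟨n - 1, by omega⟩
  obtain ⟨d, G, -, -, hd, rfl⟩ := h
  obtain ⟨q, -, -⟩ := Finset.mem_biUnion.1 hi
  exact lt_of_lt_of_le (Nat.pos_of_ne_zero fun h0 => by subst h0; exact q.elim0) (hd i hi)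

/-- The defining operation of the Schreier families also accepts empty pieces; for `n = 0` the
nonempty pieces are singletons and have to be renumbered. -/
lemma schreier_succ_of {n d : ℕ} (G : Fin d → Finset ℕ) (hG : ∀ k, SchreierE n (G k))
    (hlt : ∀ k l : Fin d, k < l → ∀ i ∈ G k, ∀ j ∈ G l, i < j)
    (hd : ∀ k, ∀ i ∈ G k, d ≤ i) : Finset.univ.biUnion G ∈ Schreier (n + 1) := by
  rcases Nat.eq_zero_or_pos n with rfl | hn
  · set F := Finset.univ.biUnion G with hF
    have hcard : F.card ≤ d := by
      have h1 : F.card ≤ ∑ k : Fin d, (G k).card := Finset.card_biUnion_le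
      have h2 : ∑ k : Fin d, (G k).card ≤ ∑ _k : Fin d, 1 := by
        refine Finset.sum_le_sum fun k _ => ?_
        rcases hG k with h | ⟨i, h⟩ <;> rw [h] <;> simp
      simpa using h1.trans h2
    refine ⟨F.card, fun k => {F.orderEmbOfFin rfl k}, fun k => ⟨_, rfl⟩, ?_, ?_, ?_⟩
    · intro k l hkl i hi j hj
      rw [Finset.mem_singleton] at hi hj
      subst hi hj
      exact (F.orderEmbOfFin rfl).strictMono hkl
    · intro i hi
      obtain ⟨k, -, hk⟩ := Finset.mem_biUnion.1 hi
      exact hcard.trans (hd k i hk)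
    · ext i
      have := Finset.range_orderEmbOfFin F rfl
      constructor
      · intro hi
        have : i ∈ Set.range (F.orderEmbOfFin rfl) := by rw [this]; exact hi
        obtain ⟨k, rfl⟩ := this
        simp
      · intro hi
        obtain ⟨k, -, hk⟩ := Finset.mem_biUnion.1 hi
        rw [Finset.mem_singleton] at hk
        subst hk
        exact Finset.orderEmbOfFin_mem F rfl k
  · refine ⟨d, G, fun k => (hG k).mem hn, hlt, ?_, rfl⟩
    intro i hi
    obtain ⟨k, -, hk⟩ := Finset.mem_biUnion.1 hi
    exact hd k i hk

/-- A convolution property of the Schreier families: if the set of the `μ i` is in `S_a` and the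
successive sets `G i`, lying to the right of `μ i`, are empty or in `S_b`, their union is empty or
in `S_{a+b}`. For `b = 0` this contains heredity and the spreading property. -/
lemma schreier_combo {ι : Type*} [LinearOrder ι] (a b : ℕ) (F : Finset ι) (μ : ι → ℕ)
    (G : ι → Finset ℕ) (hμ : ∀ i ∈ F, ∀ j ∈ F, i < j → μ i < μ j)
    (hF : F.image μ ∈ Schreier a) (hG : ∀ i ∈ F, SchreierE b (G i))
    (hge : ∀ i ∈ F, ∀ x ∈ G i, μ i ≤ x)
    (hlt : ∀ i ∈ F, ∀ j ∈ F, i < j → ∀ x ∈ G i, ∀ y ∈ G j, x < y) :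
    SchreierE (a + b) (F.biUnion G) := by
  have hinj : ∀ i ∈ F, ∀ j ∈ F, μ i < μ j → i < j := by
    intro i hi j hj hij
    by_contra hcon
    rcases (not_lt.1 hcon).eq_or_lt with h | h
    · subst h; exact lt_irrefl _ hij
    · exact absurd (hμ j hj i hi h) (by omega)
  induction a generalizing F with
  | zero =>
    obtain ⟨n, hn⟩ := hF
    have hone : ∃ i ∈ F, μ i = n := by
      have : n ∈ F.image μ := by rw [hn]; simp
      simpa using this
    obtain ⟨i, hi, rfl⟩ := hone
    have hFi : F = {i} := by
      ext j
      rw [Finset.mem_singleton]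
      refine ⟨fun hj => ?_, fun h => h ▸ hi⟩
      have hji : μ j = μ i := by
        have : μ j ∈ F.image μ := Finset.mem_image_of_mem _ hj
        rw [hn] at this; simpa using this
      rcases lt_trichotomy i j with h | h | h
      · have := hμ i hi j hj h; omega
      · exact h.symm
      · have := hμ j hj i hi h; omega
    rw [hFi, Finset.singleton_biUnion, Nat.zero_add]
    exact hG i hi
  | succ a ih =>
    obtain ⟨d, D, hD, hDlt, hdle, hFD⟩ := hF
    have hmemD : ∀ k, ∀ n ∈ D k, n ∈ F.image μ := by
      intro k n hn
      rw [hFD]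
      exact Finset.mem_biUnion.2 ⟨k, Finset.mem_univ _, hn⟩
    let Fk : Fin d → Finset ι := fun k => F.filter fun i => μ i ∈ D k
    have hsub : ∀ k, ∀ i ∈ Fk k, i ∈ F := fun k i hi => (Finset.mem_filter.1 hi).1
    have himg : ∀ k, (Fk k).image μ = D k := by
      intro k
      ext n
      simp only [Fk, Finset.mem_image, Finset.mem_filter]
      constructor
      · rintro ⟨i, ⟨-, h⟩, rfl⟩; exact h
      · intro hn
        obtain ⟨i, hi, rfl⟩ := Finset.mem_image.1 (hmemD k n hn)
        exact ⟨i, ⟨hi, hn⟩, rfl⟩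
    have hUk : ∀ k, SchreierE (a + b) ((Fk k).biUnion G) := by
      intro k
      refine ih (Fk k) (fun i hi j hj => hμ i (hsub k i hi) j (hsub k j hj)) ?_
        (fun i hi => hG i (hsub k i hi)) (fun i hi => hge i (hsub k i hi))
        (fun i hi j hj => hlt i (hsub k i hi) j (hsub k j hj))
        (fun i hi j hj => hinj i (hsub k i hi) j (hsub k j hj))
      rw [himg k]; exact hD k
    have hunion : F.biUnion G = Finset.univ.biUnion fun k => (Fk k).biUnion G := by
      ext x
      simp only [Finset.mem_biUnion, Finset.mem_univ, true_and, Fk, Finset.mem_filter]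
      constructor
      · rintro ⟨i, hi, hx⟩
        have : μ i ∈ F.image μ := Finset.mem_image_of_mem _ hi
        rw [hFD] at this
        obtain ⟨k, -, hk⟩ := Finset.mem_biUnion.1 this
        exact ⟨k, i, ⟨hi, hk⟩, hx⟩
      · rintro ⟨k, i, ⟨hi, -⟩, hx⟩
        exact ⟨i, hi, hx⟩
    right
    rw [hunion, show a + 1 + b = (a + b) + 1 by omega]
    refine schreier_succ_of _ hUk ?_ ?_
    · intro k l hkl x hx y hy
      obtain ⟨i, hi, hx⟩ := Finset.mem_biUnion.1 hx
      obtain ⟨j, hj, hy⟩ := Finset.mem_biUnion.1 hy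
      have hi' := Finset.mem_filter.1 hi
      have hj' := Finset.mem_filter.1 hj
      exact hlt i hi'.1 j hj'.1
        (hinj i hi'.1 j hj'.1 (hDlt k l hkl _ hi'.2 _ hj'.2)) x hx y hy
    · intro k x hx
      obtain ⟨i, hi, hx⟩ := Finset.mem_biUnion.1 hx
      have hi' := (Finset.mem_filter.1 hi).1
      exact (hdle _ (Finset.mem_image_of_mem _ hi')).trans (hge i hi' x hx)

lemma SchreierE.subset {n : ℕ} {F G : Finset ℕ} (h : SchreierE n F) (hGF : G ⊆ F) :
    SchreierE n G := by
  rcases h with rfl | h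
  · left; exact Finset.subset_empty.1 hGF
  · have := schreier_combo n 0 F id (fun i => if i ∈ G then {i} else ∅)
      (fun i _ j _ hij => hij) (by simpa using h)
      (fun i _ => by
        by_cases hi : i ∈ G
        · right; exact ⟨i, by simp [hi]⟩
        · left; simp [hi])
      (fun i _ x hx => by
        by_cases hi : i ∈ G
        · simp [hi] at hx; simp [hx]
        · simp [hi] at hx)
      (fun i _ j _ hij x hx y hy => by
        by_cases hi : i ∈ G <;> by_cases hj : j ∈ G <;> simp [hi, hj] at hx hy
        omega)
    rw [Nat.add_zero] at this
    convert this using 1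
    ext x
    simp only [Finset.mem_biUnion]
    constructor
    · intro hx; exact ⟨x, hGF hx, by simp [hx]⟩
    · rintro ⟨i, -, hx⟩
      by_cases hi : i ∈ G
      · simp [hi] at hx; exact hx ▸ hi
      · simp [hi] at hx

lemma SchreierE.mono {a b : ℕ} (hab : a ≤ b) {F : Finset ℕ} (hpos : ∀ i ∈ F, 0 < i)
    (h : SchreierE a F) : SchreierE b F := by
  induction b, hab using Nat.le_induction with
  | base => exact h
  | succ b _ ih =>
    right
    have := schreier_succ_of (n := b) (d := 1) (fun _ => F) (fun _ => ih)
      (fun k l hkl => absurd hkl (by omega)) (fun _ i hi => hpos i hi)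
    simpa using this
/-! ### The norming set -/

lemma IWParams.two_le_m (P : IWParams) (j : ℕ) : 2 ≤ P.m j :=
  P.m_first ▸ P.m_mono.monotone (Nat.zero_le j)

lemma IWParams.one_le_n (P : IWParams) (j : ℕ) : 1 ≤ P.n j :=
  P.n_first ▸ P.n_mono.monotone (Nat.zero_le j)

lemma IWParams.sum_n_pos (P : IWParams) {l : ℕ} (hl : 0 < l) (js : Fin l → ℕ) :
    0 < ∑ i, P.n (js i) :=
  lt_of_lt_of_le (P.one_le_n (js ⟨0, hl⟩))
    (Finset.single_le_sum (f := fun i => P.n (js i)) (fun _ _ => Nat.zero_le _)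
      (Finset.mem_univ (⟨0, hl⟩ : Fin l)))

lemma IWParams.one_le_prod (P : IWParams) {l : ℕ} (js : Fin l → ℕ) :
    1 ≤ ∏ i, P.m (js i) :=
  Nat.succ_le_of_lt (Finset.prod_pos fun _ _ => lt_of_lt_of_le two_pos (P.two_le_m _))

lemma IWParams.two_le_prod (P : IWParams) {l : ℕ} (hl : 0 < l) (js : Fin l → ℕ) :
    2 ≤ ∏ i, P.m (js i) := by
  obtain ⟨k, rfl⟩ : ∃ k, l = k + 1 := ⟨l - 1, by omega⟩
  rw [Fin.prod_univ_succ]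
  exact (P.two_le_m _).trans
    (Nat.le_mul_of_pos_right _ (P.one_le_prod fun i : Fin k => js i.succ))

/-- Comparing consecutive terms only is enough for a block sequence to be very fast growing. -/
lemma vfg_all {d : ℕ} {f : Fin d → c00} {w : Fin d → ℕ∞}
    (hbl : ∀ q r : Fin d, q < r → Blocks (f q) (f r))
    (hvfg : ∀ q r : Fin d, (q : ℕ) + 1 = (r : ℕ) → (maxSupp (f q) : ℕ∞) < w r)
    (q r : Fin d) (hqr : q < r) : (maxSupp (f q) : ℕ∞) < w r := by
  have hqr' : (q : ℕ) < r := hqr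
  have hr := r.2
  let r' : Fin d := ⟨(r : ℕ) - 1, by omega⟩
  refine lt_of_le_of_lt ?_ (hvfg r' r (show (r : ℕ) - 1 + 1 = r by omega))
  rcases (show q ≤ r' from (show (q : ℕ) ≤ (r : ℕ) - 1 by omega)).eq_or_lt with h | h
  · rw [h]
  · have := hbl q r' h
    exact_mod_cast this.le.trans (minSupp_le_maxSupp _)

/-- The operations of `W_iw` for a finite family that need not be enumerated increasingly. -/
lemma WIW.build (P : IWParams) {ι : Type*} (T : Finset ι) (f : ι → c00) (ω : ι → ℕ∞)
    {l : ℕ} (hl : 0 < l) (js : Fin l → ℕ) (hW : ∀ i ∈ T, WIW P (f i) (ω i))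
    (hne : ∀ i ∈ T, (f i).support.Nonempty)
    (hord : ∀ i ∈ T, ∀ j ∈ T, i ≠ j → (Blocks (f i) (f j) ∧ (maxSupp (f i) : ℕ∞) < ω j) ∨
      (Blocks (f j) (f i) ∧ (maxSupp (f j) : ℕ∞) < ω i))
    (hadm : SchreierE (∑ i, P.n (js i)) (T.image fun i => minSupp (f i))) :
    WIW P (((∏ i, P.m (js i) : ℕ) : ℝ)⁻¹ • ∑ i ∈ T, f i) ((∏ i, P.m (js i) : ℕ) : ℕ∞) := by
  classical
  set M := T.image fun i => minSupp (f i)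
  have hex : ∀ q : Fin M.card, ∃ i ∈ T, minSupp (f i) = M.orderEmbOfFin rfl q := by
    intro q
    exact Finset.mem_image.1 (Finset.orderEmbOfFin_mem M rfl q)
  choose g hgT hg using hex
  have hkey : ∀ q r, q < r →
      Blocks (f (g q)) (f (g r)) ∧ (maxSupp (f (g q)) : ℕ∞) < ω (g r) := by
    intro q r hqr
    have hlt : minSupp (f (g q)) < minSupp (f (g r)) := by
      rw [hg, hg]; exact (M.orderEmbOfFin rfl).strictMono hqr
    have hne' : g q ≠ g r := fun h => by rw [h] at hlt; exact lt_irrefl _ hlt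
    rcases hord _ (hgT q) _ (hgT r) hne' with h | h
    · exact h
    · exact absurd h.1.minSupp_lt (by omega)
  have hinjT : ∀ i ∈ T, ∀ j ∈ T, minSupp (f i) = minSupp (f j) → i = j := by
    intro i hi j hj hij
    by_contra hne'
    rcases hord i hi j hj hne' with h | h
    · have := h.1.minSupp_lt; omega
    · have := h.1.minSupp_lt; omega
  have hsurj : ∀ i ∈ T, ∃ q, g q = i := by
    intro i hi
    have hmem : minSupp (f i) ∈ Set.range (M.orderEmbOfFin rfl) := by
      rw [Finset.range_orderEmbOfFin]
      exact Finset.mem_image_of_mem (fun i => minSupp (f i)) hi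
    obtain ⟨q, hq⟩ := hmem
    exact ⟨q, hinjT _ (hgT q) _ hi ((hg q).trans hq)⟩
  have hsum : ∑ q, f (g q) = ∑ i ∈ T, f i := by
    refine Finset.sum_bij (fun q _ => g q) (fun q _ => hgT q) ?_ ?_ (fun _ _ => rfl)
    · intro q _ r _ hqr
      apply (M.orderEmbOfFin rfl).injective
      rw [← hg, ← hg, hqr]
    · intro i hi
      obtain ⟨q, hq⟩ := hsurj i hi
      exact ⟨q, Finset.mem_univ _, hq⟩
  rw [← hsum]
  refine WIW.op l hl js M.card (fun q => f (g q)) (fun q => ω (g q)) (fun q => hW _ (hgT q))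
    ⟨fun q => hne _ (hgT q), fun q r hqr => (hkey q r hqr).1, ?_⟩
    (fun q r hqr => (hkey q r (Fin.lt_def.2 (by omega))).2)
  have : (Finset.univ.image fun q => minSupp (f (g q))) = M := by
    ext n
    simp only [Finset.mem_image, Finset.mem_univ, true_and]
    constructor
    · rintro ⟨q, rfl⟩
      exact Finset.mem_image_of_mem (fun i => minSupp (f i)) (hgT q)
    · intro hn
      obtain ⟨i, hi, rfl⟩ := Finset.mem_image.1 hn
      obtain ⟨q, rfl⟩ := hsurj i hi
      exact ⟨q, rfl⟩
  rw [this]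
  exact hadm.mem (P.sum_n_pos hl js)

lemma memWIW_zero (P : IWParams) : memWIW P 0 := by
  have := WIW.build P (∅ : Finset ℕ) (fun _ => 0) (fun _ => ⊤) one_pos (fun _ => 0)
    (by simp) (by simp) (by simp) (Or.inl (by simp))
  exact ⟨_, by simpa using this⟩

lemma WIW.neg {P : IWParams} {f : c00} {w : ℕ∞} (h : WIW P f w) : WIW P (-f) w := by
  induction h with
  | unit i s hs =>
    rw [← Finsupp.single_neg]
    refine WIW.unit i (-s) ?_
    rcases hs with rfl | rfl <;> simp
  | op l hl js d f w hf hadm hvfg ih =>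
    rw [← smul_neg, ← Finset.sum_neg_distrib]
    have hmin : ∀ x : c00, minSupp (-x) = minSupp x := fun x => by
      simp [minSupp, Finsupp.support_neg]
    have hmax : ∀ x : c00, maxSupp (-x) = maxSupp x := fun x => by
      simp [maxSupp, Finsupp.support_neg]
    refine WIW.op l hl js d (fun q => -f q) w ih ⟨?_, ?_, ?_⟩ ?_
    · intro q; rw [Finsupp.support_neg]; exact hadm.1 q
    · intro q r hqr
      rw [Blocks, hmin, hmax]; exact hadm.2.1 q r hqr
    · simp only [hmin]; exact hadm.2.2
    · intro q r hqr; rw [hmax]; exact hvfg q r hqr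

lemma eq_of_mem_supports {d : ℕ} {f : Fin d → c00}
    (hbl : ∀ q r : Fin d, q < r → Blocks (f q) (f r)) {q r : Fin d} {i : ℕ}
    (hq : i ∈ (f q).support) (hr : i ∈ (f r).support) : q = r := by
  rcases lt_trichotomy q r with h | h | h
  · exact absurd ((hbl q r h).lt hq hr) (lt_irrefl _)
  · exact h
  · exact absurd ((hbl r q h).lt hr hq) (lt_irrefl _)

lemma sum_apply_of_mem {d : ℕ} {f : Fin d → c00}
    (hbl : ∀ q r : Fin d, q < r → Blocks (f q) (f r)) {q : Fin d} {i : ℕ}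
    (hq : i ∈ (f q).support) : (∑ r, f r) i = f q i := by
  rw [Finsupp.finsetSum_apply]
  refine Finset.sum_eq_single q (fun r _ hr => ?_) (by simp)
  by_contra h
  exact hr (eq_of_mem_supports hbl (Finsupp.mem_support_iff.2 h) hq)

lemma WIW.abs_apply_le {P : IWParams} {f : c00} {w : ℕ∞} (h : WIW P f w) (i : ℕ) :
    |f i| ≤ 1 := by
  induction h with
  | unit j s hs =>
    rw [Finsupp.single_apply]
    split_ifs
    · rcases hs with rfl | rfl <;> simp
    · simp
  | op l hl js d f w hf hadm hvfg ih =>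
    have hs : |(∑ q, f q) i| ≤ 1 := by
      by_cases hex : ∃ q, i ∈ (f q).support
      · obtain ⟨q, hq⟩ := hex
        rw [sum_apply_of_mem hadm.2.1 hq]
        exact ih q
      · push Not at hex
        rw [Finsupp.finsetSum_apply, Finset.sum_eq_zero]
        · simp
        · intro q _; exact Finsupp.notMem_support_iff.1 (hex q)
    have hm : (1 : ℝ) ≤ ((∏ i, P.m (js i) : ℕ) : ℝ) := by exact_mod_cast P.one_le_prod js
    rw [Finsupp.smul_apply, smul_eq_mul, abs_mul, abs_of_nonneg (by positivity)]
    exact mul_le_one₀ (inv_le_one_of_one_le₀ hm) (abs_nonneg _) hs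

/-- `W_iw` is closed under restriction to arbitrary sets, and nonzero restrictions keep their
weight. -/
lemma WIW.restrict {P : IWParams} {f : c00} {w : ℕ∞} (h : WIW P f w) (A : Finset ℕ) :
    Finsupp.filter (· ∈ A) f = 0 ∨ WIW P (Finsupp.filter (· ∈ A) f) w := by
  classical
  induction h with
  | unit i s hs =>
    by_cases hi : i ∈ A
    · right
      rw [Finsupp.filter_single_of_pos _ hi]
      exact WIW.unit i s hs
    · left; exact Finsupp.filter_single_of_neg _ hi
  | op l hl js d f w hf hadm hvfg ih =>
    right
    set R : c00 →+ c00 := Finsupp.filterAddHom (· ∈ A) with hR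
    have hRapp : ∀ x, Finsupp.filter (· ∈ A) x = R x := fun x => rfl
    have hRsub : ∀ x, (R x).support ⊆ x.support := fun x => by
      rw [← hRapp, Finsupp.support_filter]; exact Finset.filter_subset _ _
    let T : Finset (Fin d) := Finset.univ.filter fun q => R (f q) ≠ 0
    have hT : ∀ q ∈ T, R (f q) ≠ 0 := fun q hq => (Finset.mem_filter.1 hq).2
    have hTne : ∀ q ∈ T, (R (f q)).support.Nonempty := fun q hq =>
      Finsupp.support_nonempty_iff.2 (hT q hq)
    have hbl : ∀ q ∈ T, ∀ r ∈ T, q < r →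
        Blocks (R (f q)) (R (f r)) ∧ (maxSupp (R (f q)) : ℕ∞) < w r := by
      intro q hq r hr hqr
      refine ⟨blocks_of_lt (hTne q hq) (hTne r hr) fun i hi j hj =>
        (hadm.2.1 q r hqr).lt (hRsub _ hi) (hRsub _ hj), ?_⟩
      refine lt_of_le_of_lt ?_ (vfg_all hadm.2.1 hvfg q r hqr)
      exact_mod_cast le_maxSupp (hRsub _ (maxSupp_mem (hTne q hq)))
    have hsum : R (∑ q, f q) = ∑ q ∈ T, R (f q) := by
      rw [map_sum, Finset.sum_filter_ne_zero]
    have hsm : Finsupp.filter (· ∈ A) (((∏ i, P.m (js i) : ℕ) : ℝ)⁻¹ • ∑ q, f q)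
        = ((∏ i, P.m (js i) : ℕ) : ℝ)⁻¹ • ∑ q ∈ T, R (f q) := by
      rw [Finsupp.filter_smul, hRapp, hsum]
    rw [hsm]
    refine WIW.build P T (fun q => R (f q)) w hl js ?_ hTne ?_ ?_
    · intro q hq
      exact (ih q).resolve_left (hT q hq)
    · intro q hq r hr hqr
      rcases lt_or_gt_of_ne hqr with h | h
      · exact Or.inl (hbl q hq r hr h)
      · exact Or.inr (hbl r hr q hq h)
    · have hc := schreier_combo (∑ i, P.n (js i)) 0 (Finset.univ : Finset (Fin d))
        (fun q => minSupp (f q)) (fun q => if q ∈ T then {minSupp (R (f q))} else ∅)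
        (fun q _ r _ hqr => (hadm.2.1 q r hqr).minSupp_lt) hadm.2.2
        (fun q _ => by
          by_cases hq : q ∈ T
          · right; exact ⟨minSupp (R (f q)), by rw [if_pos hq]⟩
          · left; rw [if_neg hq])
        (fun q _ x hx => by
          by_cases hq : q ∈ T
          · rw [if_pos hq, Finset.mem_singleton] at hx
            rw [hx]
            exact minSupp_le (hRsub _ (minSupp_mem (hTne q hq)))
          · rw [if_neg hq] at hx; simp at hx)
        (fun q _ r _ hqr x hx y hy => by
          by_cases hq : q ∈ T
          · by_cases hr : r ∈ T
            · rw [if_pos hq, Finset.mem_singleton] at hx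
              rw [if_pos hr, Finset.mem_singleton] at hy
              rw [hx, hy]
              exact (hbl q hq r hr hqr).1.minSupp_lt
            · rw [if_neg hr] at hy; simp at hy
          · rw [if_neg hq] at hx; simp at hx)
      rw [Nat.add_zero] at hc
      refine hc.subset fun n hn => ?_
      obtain ⟨q, hq, rfl⟩ := Finset.mem_image.1 hn
      refine Finset.mem_biUnion.2 ⟨q, Finset.mem_univ _, ?_⟩
      rw [if_pos hq, Finset.mem_singleton]

/-! ### The norm and the pairing -/

/-- Evaluation at a vector, as a linear functional on `c00`. -/
noncomputable def evalAt (x : c00) : c00 →ₗ[ℝ] ℝ := Finsupp.linearCombination ℝ (⇑x)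

lemma evalPair_eq (f x : c00) : evalPair f x = evalAt x f := rfl

lemma evalAt_eq_sum (f x : c00) {A : Finset ℕ} (hA : f.support ⊆ A) :
    evalAt x f = ∑ i ∈ A, f i * x i := by
  rw [← evalPair_eq, evalPair]
  exact Finsupp.sum_of_support_subset f hA _ (by simp)

lemma evalAt_eq_sum' (f x : c00) {A : Finset ℕ} (hA : x.support ⊆ A) :
    evalAt x f = ∑ i ∈ A, f i * x i := by
  rw [evalAt_eq_sum f x (Finset.subset_union_left : f.support ⊆ f.support ∪ A)]
  symm
  refine Finset.sum_subset Finset.subset_union_right fun i _ hi => ?_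
  have : x i = 0 := Finsupp.notMem_support_iff.1 fun h => hi (hA h)
  rw [this, mul_zero]

lemma iwNorm_bddAbove (P : IWParams) (x : c00) :
    BddAbove {r | ∃ f, memWIW P f ∧ r = evalPair f x} := by
  refine ⟨∑ i ∈ x.support, |x i|, ?_⟩
  rintro r ⟨f, ⟨w, hf⟩, rfl⟩
  rw [evalPair_eq, evalAt_eq_sum' f x (le_refl _)]
  refine Finset.sum_le_sum fun i _ => ?_
  refine (le_abs_self _).trans ?_
  rw [abs_mul]
  exact mul_le_of_le_one_left (abs_nonneg _) (hf.abs_apply_le i)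

lemma memWIW.abs_le {P : IWParams} {f x : c00} (hf : memWIW P f) (hx : iwNorm P x ≤ 1) :
    |evalAt x f| ≤ 1 := by
  have h : ∀ g, memWIW P g → evalAt x g ≤ 1 := fun g hg =>
    (le_csSup (iwNorm_bddAbove P x) ⟨g, hg, rfl⟩).trans hx
  obtain ⟨w, hf⟩ := hf
  rw [_root_.abs_le]
  have h1 := h (-f) ⟨w, hf.neg⟩
  rw [map_neg] at h1
  exact ⟨by linarith, h f ⟨w, hf⟩⟩

lemma abs_apply_le_one {P : IWParams} {x : c00} (hx : iwNorm P x ≤ 1) (i : ℕ) : |x i| ≤ 1 := by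
  have h := memWIW.abs_le (P := P) (f := Finsupp.single i 1) ⟨⊤, WIW.unit i 1 (Or.inl rfl)⟩ hx
  simpa [evalAt] using h

lemma evalAt_le_of_dual {P : IWParams} {f x : c00} (hf : iwDualNorm P f ≤ 1)
    (hx : iwNorm P x ≤ 1) : evalAt x f ≤ 1 := by
  suffices hbdd : BddAbove {r | ∃ x : c00, iwNorm P x ≤ 1 ∧ r = evalPair f x} by
    exact (le_csSup hbdd ⟨x, hx, rfl⟩).trans hf
  refine ⟨∑ i ∈ f.support, |f i|, ?_⟩
  rintro r ⟨y, hy, rfl⟩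
  rw [evalPair_eq, evalAt_eq_sum f y (le_refl _)]
  refine Finset.sum_le_sum fun i _ => ?_
  refine (le_abs_self _).trans ?_
  rw [abs_mul]
  exact mul_le_of_le_one_right (abs_nonneg _) (abs_apply_le_one hy i)

lemma iwDualNorm_le {P : IWParams} {f : c00} {C : ℝ}
    (h : ∀ x, iwNorm P x ≤ 1 → evalAt x f ≤ C) : iwDualNorm P f ≤ C := by
  refine csSup_le ⟨evalPair f 0, 0, ?_, rfl⟩ ?_
  · refine csSup_le ⟨_, 0, memWIW_zero P, rfl⟩ ?_
    rintro r ⟨g, -, rfl⟩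
    simp [evalPair]
  · rintro r ⟨x, hx, rfl⟩
    exact h x hx

/-- The elements of `W_iw` supported in `A`. -/
def WSet (P : IWParams) (A : Finset ℕ) : Set c00 := {z | memWIW P z ∧ z.support ⊆ A}

lemma abs_evalAt_le_of_mem_convexHull {P : IWParams} {A : Finset ℕ} {c x : c00}
    (hc : c ∈ convexHull ℝ (WSet P A)) (hx : iwNorm P x ≤ 1) : |evalAt x c| ≤ 1 := by
  have hconv : Convex ℝ {z : c00 | |evalAt x z| ≤ 1} := by
    have : {z : c00 | |evalAt x z| ≤ 1} = (evalAt x) ⁻¹' Set.Icc (-1) 1 := by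
      ext z; simp [abs_le]
    rw [this]
    exact (convex_Icc _ _).linear_preimage _
  exact convexHull_min (fun z hz => hz.1.abs_le hx) hconv hc

lemma support_subset_of_mem_convexHull {P : IWParams} {A : Finset ℕ} {c : c00}
    (hc : c ∈ convexHull ℝ (WSet P A)) : c.support ⊆ A := by
  have hconv : Convex ℝ {z : c00 | z.support ⊆ A} := by
    intro y hy z hz a b _ _ _ i hi
    by_contra hiA
    have h1 : y i = 0 := Finsupp.notMem_support_iff.1 fun h => hiA (hy h)
    have h2 : z i = 0 := Finsupp.notMem_support_iff.1 fun h => hiA (hz h)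
    rw [Finsupp.mem_support_iff] at hi
    exact hi (by simp [h1, h2])
  exact convexHull_min (t := {z : c00 | z.support ⊆ A}) (fun z hz => hz.2) hconv hc

/-- A functional in the dual ball is, up to coordinatewise errors, a convex combination of
elements of `W_iw` with support in its own support: otherwise a vector carried by that support
separates it from the convex hull, as `W_iw` is closed under restrictions. -/
lemma exists_convex_approx {P : IWParams} {f : c00} (hf : iwDualNorm P f ≤ 1) {η : ℝ}
    (hη : 0 < η) : ∃ c ∈ convexHull ℝ (WSet P f.support), ∀ i, |f i - c i| ≤ η := by
  classical
  set A := f.support with hA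
  let ρ : c00 →ₗ[ℝ] (A → ℝ) :=
    { toFun := fun z i => z i
      map_add' := fun _ _ => rfl
      map_smul' := fun _ _ => rfl }
  let K : Set (A → ℝ) := ρ '' convexHull ℝ (WSet P A)
  have hKc : Convex ℝ K := (convex_convexHull ℝ _).linear_image ρ
  have hsuppc : ∀ c ∈ convexHull ℝ (WSet P A), c.support ⊆ A :=
    fun c hc => support_subset_of_mem_convexHull hc
  have hmem : ρ f ∈ closure K := by
    by_contra hcon
    obtain ⟨φ, u, hu, hfu⟩ :=
      geometric_hahn_banach_closed_point hKc.closure isClosed_closure hcon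
    have hu0 : 0 < u := by
      have h0 : (0 : A → ℝ) ∈ closure K := subset_closure
        ⟨0, subset_convexHull ℝ _ ⟨memWIW_zero P, by simp⟩, map_zero ρ⟩
      simpa using hu 0 h0
    let v : c00 := ∑ i : A, Finsupp.single (i : ℕ) (φ (Pi.single i 1))
    have hφ : ∀ z : c00, z.support ⊆ A → evalAt v z = φ (ρ z) := by
      intro z hz
      have hv : ∀ i : A, v i = φ (Pi.single i 1) := by
        intro i
        simp only [v, Finsupp.finsetSum_apply, Finsupp.single_apply]
        rw [Finset.sum_eq_single i]
        · simp
        · intro j _ hji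
          rw [if_neg]
          exact fun h => hji (Subtype.ext h)
        · simp
      have h2 : φ (ρ z) = ∑ i : A, ρ z i • φ (Pi.single i 1) :=
        LinearMap.pi_apply_eq_sum_univ φ.toLinearMap (ρ z) |>.trans (by
          refine Finset.sum_congr rfl fun i _ => ?_
          have hij : (fun j => if i = j then (1 : ℝ) else 0) = Pi.single i 1 := by
            ext j
            simp [Pi.single_apply, eq_comm]
          rw [hij]
          rfl)
      rw [evalAt_eq_sum z v hz, h2, ← Finset.sum_coe_sort]
      exact Finset.sum_congr rfl fun i _ => by rw [hv i]; rfl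
    have hvsupp : v.support ⊆ A := by
      intro i hi
      by_contra hiA
      rw [Finsupp.mem_support_iff] at hi
      apply hi
      simp only [v, Finsupp.finsetSum_apply, Finsupp.single_apply]
      refine Finset.sum_eq_zero fun j _ => ?_
      rw [if_neg]
      rintro rfl
      exact hiA j.2
    have hnorm : iwNorm P (u⁻¹ • v) ≤ 1 := by
      refine csSup_le ⟨_, 0, memWIW_zero P, rfl⟩ ?_
      rintro r ⟨g, ⟨w, hg⟩, rfl⟩
      set g' := Finsupp.filter (· ∈ A) g with hg'
      have hg'supp : g'.support ⊆ A := by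
        rw [hg', Finsupp.support_filter]
        intro i hi
        exact (Finset.mem_filter.1 hi).2
      have hg'W : memWIW P g' := by
        rcases hg.restrict A with h | h
        · rw [hg', h]; exact memWIW_zero P
        · exact ⟨w, h⟩
      have heq : evalAt v g = evalAt v g' := by
        rw [evalAt_eq_sum' g v hvsupp, evalAt_eq_sum' g' v hvsupp]
        refine Finset.sum_congr rfl fun i hi => ?_
        rw [hg', Finsupp.filter_apply_pos _ _ hi]
      have hlt : evalAt v g' < u := by
        rw [hφ g' hg'supp]
        exact hu _ (subset_closure ⟨g', subset_convexHull ℝ _ ⟨hg'W, hg'supp⟩, rfl⟩)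
      have hsc : evalPair g (u⁻¹ • v) = u⁻¹ * evalAt v g := by
        rw [evalPair_eq, evalAt_eq_sum g _ (le_refl _), evalAt_eq_sum g v (le_refl _),
          Finset.mul_sum]
        refine Finset.sum_congr rfl fun i _ => ?_
        rw [Finsupp.smul_apply, smul_eq_mul]; ring
      rw [hsc, heq, inv_mul_le_iff₀ hu0]
      linarith
    have h1 := evalAt_le_of_dual hf hnorm
    have hsc : evalAt (u⁻¹ • v) f = u⁻¹ * evalAt v f := by
      rw [evalAt_eq_sum f _ (le_refl _), evalAt_eq_sum f v (le_refl _), Finset.mul_sum]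
      refine Finset.sum_congr rfl fun i _ => ?_
      rw [Finsupp.smul_apply, smul_eq_mul]; ring
    rw [hsc, inv_mul_le_iff₀ hu0, hφ f (le_refl _)] at h1
    linarith
  obtain ⟨y, ⟨c, hc, rfl⟩, hdist⟩ := Metric.mem_closure_iff.1 hmem η hη
  refine ⟨c, hc, fun i => ?_⟩
  by_cases hi : i ∈ A
  · have := dist_le_pi_dist (ρ f) (ρ c) ⟨i, hi⟩
    rw [Real.dist_eq] at this
    exact this.trans hdist.le
  · have h1 : f i = 0 := Finsupp.notMem_support_iff.1 hi
    have h2 : c i = 0 := Finsupp.notMem_support_iff.1 fun h => hi (hsuppc c hc h)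
    rw [h1, h2]; simpa using hη.le
/-! ### Splitting off the first component of a weighted functional -/

/-- `Rest P w lo A r` says that `r = w⁻¹ ∑ f_q` for a very fast growing admissible family in
`W_iw`, supported in `A`, all of whose weights, including the first one, exceed `lo`. The
empty product `w = 1` is allowed, so that a single functional of weight exceeding `lo` is
covered as well. -/
def Rest (P : IWParams) (w lo : ℕ) (A : Finset ℕ) (r : c00) : Prop :=
  ∃ (l : ℕ) (js : Fin l → ℕ) (d : ℕ) (f : Fin d → c00) (ω : Fin d → ℕ∞),
    w = ∏ i, P.m (js i) ∧ (∀ q, WIW P (f q) (ω q)) ∧ (∀ q, (f q).support.Nonempty) ∧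
    (∀ q, (f q).support ⊆ A) ∧ (∀ q, (lo : ℕ∞) < ω q) ∧
    (∀ q r : Fin d, q < r → Blocks (f q) (f r) ∧ (maxSupp (f q) : ℕ∞) < ω r) ∧
    SchreierE (∑ i, P.n (js i)) (Finset.univ.image fun q => minSupp (f q)) ∧
    r = (w : ℝ)⁻¹ • ∑ q, f q

/-- A functional of finite weight `w` is `w⁻¹ g` plus a remainder whose components have weights
beyond `min supp`: the second component already has weight larger than `max supp g`. -/
lemma WIW.split {P : IWParams} {z : c00} {w : ℕ} (h : WIW P z (w : ℕ∞)) :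
    ∃ g r : c00, 2 ≤ w ∧ memWIW P g ∧ g.support ⊆ z.support ∧ z = r + (w : ℝ)⁻¹ • g ∧
      ∀ (A : Finset ℕ) (lo : ℕ), z.support ⊆ A → (∀ i ∈ A, lo ≤ i) → Rest P w lo A r := by
  generalize hW : (w : ℕ∞) = W at h
  cases h with
  | unit i s hs => simp at hW
  | op l hl js d f ω hf hadm hvfg =>
    have hw : w = ∏ i, P.m (js i) := by exact_mod_cast hW
    subst hw
    have hm : (1 : ℝ) ≤ ((∏ i, P.m (js i) : ℕ) : ℝ) := by exact_mod_cast P.one_le_prod js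
    set z : c00 := ((∏ i, P.m (js i) : ℕ) : ℝ)⁻¹ • ∑ q, f q with hz
    have hsupp : ∀ q, (f q).support ⊆ z.support := by
      intro q i hi
      rw [Finsupp.mem_support_iff, hz, Finsupp.smul_apply, sum_apply_of_mem hadm.2.1 hi,
        smul_eq_mul]
      exact mul_ne_zero (inv_ne_zero (by linarith)) (Finsupp.mem_support_iff.1 hi)
    have hvfg' := vfg_all hadm.2.1 hvfg
    rcases d with _ | d
    · refine ⟨0, 0, P.two_le_prod hl js, memWIW_zero P, by simp, by simp [hz], ?_⟩
      intro A lo _ _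
      exact ⟨l, js, 0, fun q => q.elim0, fun q => q.elim0, rfl, fun q => q.elim0,
        fun q => q.elim0, fun q => q.elim0, fun q => q.elim0, fun q => q.elim0,
        Or.inl (by simp), by simp⟩
    · refine ⟨f 0, ((∏ i, P.m (js i) : ℕ) : ℝ)⁻¹ • ∑ q : Fin d, f q.succ,
        P.two_le_prod hl js, ⟨_, hf 0⟩, hsupp 0, ?_, ?_⟩
      · rw [hz, Fin.sum_univ_succ, smul_add, add_comm]
      · intro A lo hA hlo
        refine ⟨l, js, d, fun q => f q.succ, fun q => ω q.succ, rfl, fun q => hf _,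
          fun q => hadm.1 _, fun q => (hsupp _).trans hA, ?_, ?_, ?_, rfl⟩
        · intro q
          refine lt_of_le_of_lt ?_ (hvfg' 0 q.succ (Fin.succ_pos q))
          exact_mod_cast hlo _ (hA (hsupp 0 (maxSupp_mem (hadm.1 0))))
        · intro q r hqr
          have hqr' : q.succ < r.succ := Fin.succ_lt_succ_iff.2 hqr
          exact ⟨hadm.2.1 _ _ hqr', hvfg' _ _ hqr'⟩
        · refine SchreierE.subset (Or.inr hadm.2.2) fun n hn => ?_
          obtain ⟨q, -, rfl⟩ := Finset.mem_image.1 hn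
          exact Finset.mem_image_of_mem (fun q => minSupp (f q)) (Finset.mem_univ q.succ)

lemma Rest.of_large {P : IWParams} {z : c00} {W : ℕ∞} (h : WIW P z W) {lo : ℕ}
    (hlo : (lo : ℕ∞) < W) {A : Finset ℕ} (hA : z.support ⊆ A) : Rest P 1 lo A z := by
  by_cases hz : z.support.Nonempty
  · refine ⟨0, fun q => q.elim0, 1, fun _ => z, fun _ => W, by simp, fun _ => h, fun _ => hz,
      fun _ => hA, fun _ => hlo, fun q r hqr => absurd hqr (by omega), Or.inr ?_, by simp⟩
    exact ⟨minSupp z, by simp⟩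
  · have hz0 : z = 0 := by simpa using hz
    subst hz0
    exact ⟨0, fun q => q.elim0, 0, fun q => q.elim0, fun q => q.elim0, by simp,
      fun q => q.elim0, fun q => q.elim0, fun q => q.elim0, fun q => q.elim0,
      fun q => q.elim0, Or.inl (by simp), by simp⟩

/-- Remainders of a common weight `w` living on successive sets can be put together: their
components form one very fast growing family, which is admissible for the sum of the indices. -/
lemma rest_combine {P : IWParams} {A : ℕ → Finset ℕ} {lo μ : ℕ → ℕ}
    (hμ : ∀ i j, i < j → μ i < μ j) (hμA : ∀ i, ∀ a ∈ A i, μ i ≤ a)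
    (hA : ∀ i j, i < j → ∀ a ∈ A i, ∀ b ∈ A j, a < b)
    (hlo : ∀ i j, i < j → ∀ a ∈ A i, a ≤ lo j)
    {j0 : ℕ} {I : Finset ℕ} (hadm : SchreierE (P.n j0) (I.image μ)) {w : ℕ} {r : ℕ → c00}
    (hr : ∀ i ∈ I, Rest P w (lo i) (A i) (r i)) :
    memWIW P ((P.m j0 : ℝ)⁻¹ • ∑ i ∈ I, r i) := by
  classical
  rcases I.eq_empty_or_nonempty with rfl | hI
  · simpa using memWIW_zero P
  have hadm' := hadm.mem (P.one_le_n j0)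
  have hr' : ∀ i : I, Rest P w (lo i) (A i) (r i) := fun i => hr i i.2
  choose l js d f ω hw hW hne hsub hbig hbl hS heq using hr'
  have : Nonempty I := ⟨⟨hI.choose, hI.choose_spec⟩⟩
  -- The same weight may have several factorizations; the one with the largest
  -- Schreier index serves all indices simultaneously.
  obtain ⟨k, hk⟩ := Finite.exists_max fun i : I => ∑ t, P.n (js i t)
  have hord : ∀ s t : (Σ i : I, Fin (d i)), s.1 < t.1 →
      Blocks (f s.1 s.2) (f t.1 t.2) ∧ (maxSupp (f s.1 s.2) : ℕ∞) < ω t.1 t.2 := by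
    intro s t hst
    have hst' : (s.1 : ℕ) < t.1 := hst
    refine ⟨blocks_of_lt (hne _ _) (hne _ _) fun a ha b hb =>
      hA _ _ hst' a (hsub _ _ ha) b (hsub _ _ hb), ?_⟩
    refine lt_of_le_of_lt ?_ (hbig t.1 t.2)
    exact_mod_cast hlo _ _ hst' _ (hsub _ _ (maxSupp_mem (hne _ _)))
  have hbuild := WIW.build P (Finset.univ : Finset (Σ i : I, Fin (d i)))
    (fun s => f s.1 s.2) (fun s => ω s.1 s.2) (Nat.succ_pos (l k)) (Fin.cons j0 (js k))
    (fun s _ => hW s.1 s.2) (fun s _ => hne s.1 s.2) ?_ ?_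
  · have hgoal : memWIW P _ := ⟨_, hbuild⟩
    convert hgoal using 1
    rw [Fin.prod_univ_succ]
    simp only [Fin.cons_zero, Fin.cons_succ]
    rw [← hw k, Fintype.sum_sigma, ← Finset.sum_coe_sort I, Nat.cast_mul, mul_inv, mul_smul,
      Finset.smul_sum (s := Finset.univ) (r := (w : ℝ)⁻¹)]
    congr 1
    exact Finset.sum_congr rfl fun i _ => heq i
  · rintro ⟨i, q⟩ - ⟨i', q'⟩ - hne'
    rcases lt_trichotomy i i' with h | h | h
    · exact Or.inl (hord ⟨i, q⟩ ⟨i', q'⟩ h)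
    · subst h
      rcases lt_trichotomy q q' with h | h | h
      · exact Or.inl (hbl i q q' h)
      · subst h; exact absurd rfl hne'
      · exact Or.inr (hbl i q' q h)
    · exact Or.inr (hord ⟨i', q'⟩ ⟨i, q⟩ h)
  · rw [Fin.sum_univ_succ]
    simp only [Fin.cons_zero, Fin.cons_succ]
    have hmem : ∀ i : I, ∀ x ∈ Finset.univ.image (fun q => minSupp (f i q)), x ∈ A i := by
      intro i x hx
      obtain ⟨q, -, rfl⟩ := Finset.mem_image.1 hx
      exact hsub i q (minSupp_mem (hne i q))
    have hc := schreier_combo (P.n j0) (∑ t, P.n (js k t)) (Finset.univ : Finset I)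
      (fun i => μ i) (fun i => Finset.univ.image fun q => minSupp (f i q))
      (fun i _ j _ hij => hμ _ _ hij) ?_ ?_ ?_ ?_
    · refine hc.subset fun n hn => ?_
      obtain ⟨s, -, rfl⟩ := Finset.mem_image.1 hn
      exact Finset.mem_biUnion.2 ⟨s.1, Finset.mem_univ _,
        Finset.mem_image_of_mem (fun q => minSupp (f s.1 q)) (Finset.mem_univ s.2)⟩
    · convert hadm' using 1
      ext n
      simp
    · intro i _
      refine (hS i).mono (hk i) fun x hx => ?_
      have h1 := pos_of_mem_schreier (P.one_le_n j0) hadm' (Finset.mem_image_of_mem μ i.2)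
      exact lt_of_lt_of_le h1 (hμA i x (hmem i x hx))
    · intro i _ x hx
      exact hμA i x (hmem i x hx)
    · intro i _ j _ hij x hx y hy
      exact hA i j hij x (hmem i x hx) y (hmem j y hy)

lemma rest_sum_le {P : IWParams} {A : ℕ → Finset ℕ} {lo μ : ℕ → ℕ}
    (hμ : ∀ i j, i < j → μ i < μ j) (hμA : ∀ i, ∀ a ∈ A i, μ i ≤ a)
    (hA : ∀ i j, i < j → ∀ a ∈ A i, ∀ b ∈ A j, a < b)
    (hlo : ∀ i j, i < j → ∀ a ∈ A i, a ≤ lo j)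
    {j0 : ℕ} {I : Finset ℕ} (hadm : SchreierE (P.n j0) (I.image μ)) {w : ℕ} {x : c00}
    (hx : iwNorm P x ≤ 1) {y : ℕ → ℝ}
    (hy : ∀ i ∈ I, y i = 0 ∨ ∃ r, Rest P w (lo i) (A i) r ∧ y i = evalAt x r) :
    ∑ i ∈ I, y i ≤ P.m j0 := by
  classical
  have hmem : ∀ i, i ∈ I.filter (fun i => y i ≠ 0) →
      ∃ r, Rest P w (lo i) (A i) r ∧ y i = evalAt x r := by
    intro i hi
    rw [Finset.mem_filter] at hi
    exact (hy i hi.1).resolve_left hi.2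
  choose! r hr hyr using hmem
  have hW := rest_combine hμ hμA hA hlo
    (hadm.subset (Finset.image_subset_image (Finset.filter_subset (fun i => y i ≠ 0) I))) hr
  have hle := (abs_le.1 (hW.abs_le hx)).2
  have hm : (0 : ℝ) < P.m j0 := by
    have := P.two_le_m j0
    exact_mod_cast (by omega : 0 < P.m j0)
  rw [map_smul, map_sum, smul_eq_mul, inv_mul_le_iff₀ hm, mul_one,
    ← Finset.sum_congr rfl hyr, Finset.sum_filter_ne_zero] at hle
  exact hle

/-! ### Averaging over the weights -/

lemma exists_dominating (S : Finset c00) (a v : c00 → ℝ) (ha : ∀ z ∈ S, 0 ≤ a z)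
    (hv : ∀ z ∈ S, |v z| ≤ 2) :
    ∃ y : ℝ, |y| ≤ 2 ∧ ∑ z ∈ S, a z * v z ≤ (∑ z ∈ S, a z) * y ∧
      (y = 0 ∨ ∃ z ∈ S, y = v z) := by
  rcases S.eq_empty_or_nonempty with rfl | hS
  · exact ⟨0, by simp, by simp, Or.inl rfl⟩
  · obtain ⟨z, hz, hmax⟩ := S.exists_max_image v hS
    refine ⟨v z, hv z hz, ?_, Or.inr ⟨z, hz, rfl⟩⟩
    rw [Finset.sum_mul]
    exact Finset.sum_le_sum fun t ht => mul_le_mul_of_nonneg_left (hmax t ht) (ha t ht)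

/-- If the distributions `p i` are close to a limit distribution `lam`, with mass `1 - Λ` at
infinity, then bounds for each weight separately give the same bound for the averages. -/
lemma averaging (I : Finset ℕ) (N : ℕ → ℕ) (p y : ℕ → ℕ → ℝ) (lam z e : ℕ → ℝ) (Λ M : ℝ)
    (hM : 0 ≤ M) (hlam : ∀ w, 0 ≤ lam w) (hpart : ∀ n, ∑ w ∈ Finset.range n, lam w ≤ Λ)
    (hΛ : Λ ≤ 1) (hy2 : ∀ i w, |y i w| ≤ 2) (hz2 : ∀ i, |z i| ≤ 2)
    (h1 : ∀ i, ∑ w ∈ Finset.range (N i + 1), |p i w - lam w| ≤ e i)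
    (h2 : ∀ i, Λ - ∑ w ∈ Finset.range (N i + 1), lam w ≤ e i)
    (hy : ∀ w, ∑ i ∈ I, (if w ≤ N i then y i w else 0) ≤ M) (hz : ∑ i ∈ I, z i ≤ M) :
    ∑ i ∈ I, (∑ w ∈ Finset.range (N i + 1), p i w * y i w +
      (1 - ∑ w ∈ Finset.range (N i + 1), p i w) * z i) ≤ M + 6 * ∑ i ∈ I, e i := by
  have hterm : ∀ i, ∑ w ∈ Finset.range (N i + 1), p i w * y i w +
      (1 - ∑ w ∈ Finset.range (N i + 1), p i w) * z i ≤
      (∑ w ∈ Finset.range (N i + 1), lam w * y i w + (1 - Λ) * z i) + 6 * e i := by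
    intro i
    have ha : ∑ w ∈ Finset.range (N i + 1), (p i w - lam w) * y i w ≤ 2 * e i := by
      calc ∑ w ∈ Finset.range (N i + 1), (p i w - lam w) * y i w
          ≤ ∑ w ∈ Finset.range (N i + 1), |p i w - lam w| * 2 := by
            refine Finset.sum_le_sum fun w _ => ?_
            refine (le_abs_self _).trans ?_
            rw [abs_mul]
            exact mul_le_mul_of_nonneg_left (hy2 i w) (abs_nonneg _)
        _ = (∑ w ∈ Finset.range (N i + 1), |p i w - lam w|) * 2 := by rw [Finset.sum_mul]
        _ ≤ 2 * e i := by linarith [h1 i]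
    have hb : |∑ w ∈ Finset.range (N i + 1), (p i w - lam w)| ≤ e i :=
      (Finset.abs_sum_le_sum_abs _ _).trans (h1 i)
    simp only [sub_mul] at ha
    rw [Finset.sum_sub_distrib] at ha hb
    set Sp := ∑ w ∈ Finset.range (N i + 1), p i w
    set Sl := ∑ w ∈ Finset.range (N i + 1), lam w
    have hc : |Λ - Sp| ≤ 2 * e i := by
      have h3 := hpart (N i + 1)
      have h4 := h2 i
      rw [abs_le] at hb ⊢
      constructor <;> linarith [hb.1, hb.2]
    have hd : (Λ - Sp) * z i ≤ 4 * e i := by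
      refine (le_abs_self _).trans ?_
      rw [abs_mul]
      have := mul_le_mul hc (hz2 i) (abs_nonneg _) (le_trans (abs_nonneg _) hc)
      linarith
    nlinarith
  refine (Finset.sum_le_sum fun i _ => hterm i).trans ?_
  rw [Finset.sum_add_distrib, Finset.sum_add_distrib, ← Finset.mul_sum, ← Finset.mul_sum]
  set R := I.sup N + 1 with hR
  have hcomm : ∑ i ∈ I, ∑ w ∈ Finset.range (N i + 1), lam w * y i w =
      ∑ w ∈ Finset.range R, lam w * ∑ i ∈ I, (if w ≤ N i then y i w else 0) := by
    simp only [Finset.mul_sum]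
    rw [Finset.sum_comm]
    refine Finset.sum_congr rfl fun i hi => ?_
    have hle : N i ≤ I.sup N := Finset.le_sup hi
    have hsub : Finset.range (N i + 1) ⊆ Finset.range R :=
      Finset.range_subset_range.2 (by omega)
    rw [← Finset.sum_subset hsub]
    · refine Finset.sum_congr rfl fun w hw => ?_
      rw [if_pos (by rw [Finset.mem_range] at hw; omega)]
    · intro w _ hw
      rw [if_neg (by rw [Finset.mem_range] at hw; omega), mul_zero]
  have hA : ∑ w ∈ Finset.range R, lam w * ∑ i ∈ I, (if w ≤ N i then y i w else 0) ≤ Λ * M := by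
    calc _ ≤ ∑ w ∈ Finset.range R, lam w * M :=
          Finset.sum_le_sum fun w _ => mul_le_mul_of_nonneg_left (hy w) (hlam w)
      _ = (∑ w ∈ Finset.range R, lam w) * M := by rw [Finset.sum_mul]
      _ ≤ Λ * M := mul_le_mul_of_nonneg_right (hpart R) hM
  have hB : (1 - Λ) * ∑ i ∈ I, z i ≤ (1 - Λ) * M :=
    mul_le_mul_of_nonneg_left hz (by linarith)
  rw [hcomm]
  linarith
/-! ### One step of the decomposition -/

lemma exists_weight_split (P : IWParams) : ∃ (wt : c00 → ℕ∞) (g r : c00 → c00), ∀ z,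
    memWIW P z → WIW P z (wt z) ∧ ∀ w : ℕ, wt z = w → 2 ≤ w ∧ memWIW P (g z) ∧
      (g z).support ⊆ z.support ∧ z = r z + (w : ℝ)⁻¹ • g z ∧
      ∀ (A : Finset ℕ) (lo : ℕ), z.support ⊆ A → (∀ i ∈ A, lo ≤ i) → Rest P w lo A (r z) := by
  have h : ∀ z, ∃ (W : ℕ∞) (g r : c00), memWIW P z → WIW P z W ∧ ∀ w : ℕ, W = w → 2 ≤ w ∧
      memWIW P g ∧ g.support ⊆ z.support ∧ z = r + (w : ℝ)⁻¹ • g ∧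
      ∀ (A : Finset ℕ) (lo : ℕ), z.support ⊆ A → (∀ i ∈ A, lo ≤ i) → Rest P w lo A r := by
    intro z
    by_cases hz : memWIW P z
    · obtain ⟨W, hW⟩ := hz
      by_cases hfin : ∃ w : ℕ, W = w
      · obtain ⟨w, rfl⟩ := hfin
        obtain ⟨g, r, hgr⟩ := hW.split
        refine ⟨w, g, r, fun _ => ⟨hW, fun w' hw' => ?_⟩⟩
        have : w = w' := by exact_mod_cast hw'
        subst this
        exact hgr
      · exact ⟨W, 0, 0, fun _ => ⟨hW, fun w hw => absurd ⟨w, hw⟩ hfin⟩⟩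
    · exact ⟨⊤, 0, 0, fun h => absurd h hz⟩
  choose wt g r h using h
  exact ⟨wt, g, r, h⟩

lemma exists_convex_rep {S : Set c00} {c : c00} (hc : c ∈ convexHull ℝ S) :
    ∃ (T : Finset c00) (a : c00 → ℝ), ↑T ⊆ S ∧ (∀ z ∈ T, 0 ≤ a z) ∧ ∑ z ∈ T, a z = 1 ∧
      ∑ z ∈ T, a z • z = c := by
  rw [convexHull_eq_union_convexHull_finite_subsets] at hc
  simp only [Set.mem_iUnion] at hc
  obtain ⟨T, hT, hc⟩ := hc
  obtain ⟨a, h0, h1, h2⟩ := Finset.mem_convexHull'.1 hc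
  exact ⟨T, a, hT, h0, h1, h2⟩

/-- Along an infinite set and a sequence of finite cut-offs, distributions `p k` on the natural
numbers (of total mass at most one) converge, with prescribed speed and with the prescribed
interlacing `M (κ i) ≤ N (i + 1) ≤ κ (i + 1)`, to a limit distribution `lam`. -/
lemma exists_subsequence (p : ℕ → ℕ → ℝ) (hp0 : ∀ k w, 0 ≤ p k w)
    (hp1 : ∀ k n, ∑ w ∈ Finset.range n, p k w ≤ 1) (L : Set ℕ) (hL : L.Infinite)
    (M : ℕ → ℕ) (e : ℕ → ℝ) (he : ∀ i, 0 < e i) :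
    ∃ (lam : ℕ → ℝ) (Λ : ℝ) (κ N : ℕ → ℕ), (∀ w, 0 ≤ lam w) ∧
      (∀ n, ∑ w ∈ Finset.range n, lam w ≤ Λ) ∧ Λ ≤ 1 ∧ StrictMono κ ∧ (∀ i, κ i ∈ L) ∧
      (∀ i, N i ≤ κ i) ∧ (∀ i, M (κ i) ≤ N (i + 1)) ∧
      (∀ i, ∑ w ∈ Finset.range (N i + 1), |p (κ i) w - lam w| ≤ e i) ∧
      (∀ i, Λ - ∑ w ∈ Finset.range (N i + 1), lam w ≤ e i) := by
  classical
  have hsm : StrictMono (Nat.nth (· ∈ L)) := Nat.nth_strictMono hL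
  have hmem : ∀ i, Nat.nth (· ∈ L) i ∈ L := fun i => Nat.nth_mem_of_infinite hL i
  have hle1 : ∀ k w, p k w ≤ 1 := fun k w =>
    (Finset.single_le_sum (f := fun w => p k w) (fun w _ => hp0 k w)
      (Finset.self_mem_range_succ w)).trans (hp1 k (w + 1))
  have hcomp : IsCompact (Set.univ.pi fun _ : ℕ => Set.Icc (0 : ℝ) 1) :=
    isCompact_univ_pi fun _ => isCompact_Icc
  obtain ⟨lam, -, φ, hφ, hlim⟩ := hcomp.tendsto_subseq
    (x := fun i => p (Nat.nth (· ∈ L) i)) (fun i w _ => ⟨hp0 _ w, hle1 _ w⟩)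
  set s : ℕ → ℕ := fun i => Nat.nth (· ∈ L) (φ i) with hs
  have hsmono : StrictMono s := hsm.comp hφ
  have hlimw : ∀ w, Tendsto (fun i => p (s i) w) atTop (𝓝 (lam w)) := fun w =>
    (tendsto_pi_nhds.1 hlim) w
  have hlam0 : ∀ w, 0 ≤ lam w := fun w =>
    ge_of_tendsto' (hlimw w) fun i => hp0 _ w
  have hlam1 : ∀ n, ∑ w ∈ Finset.range n, lam w ≤ 1 := fun n =>
    le_of_tendsto' (tendsto_finsetSum (Finset.range n) fun w _ => hlimw w) fun i => hp1 _ n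
  have hsum : Summable lam := summable_of_sum_range_le hlam0 hlam1
  have hpart : ∀ n, ∑ w ∈ Finset.range n, lam w ≤ ∑' w, lam w := fun n =>
    hsum.sum_le_tsum _ fun w _ => hlam0 w
  have hΛ1 : ∑' w, lam w ≤ 1 := hsum.tsum_le_of_sum_range_le hlam1
  set Λ := ∑' w, lam w with hΛ
  have hstep : ∀ i k : ℕ, ∃ N k' : ℕ, k' ∈ L ∧ k < k' ∧ M k ≤ N ∧ N ≤ k' ∧
      ∑ w ∈ Finset.range (N + 1), |p k' w - lam w| ≤ e i ∧
      Λ - ∑ w ∈ Finset.range (N + 1), lam w ≤ e i := by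
    intro i k
    have h1 : ∀ᶠ n in atTop, Λ - e i < ∑ w ∈ Finset.range n, lam w :=
      hsum.hasSum.tendsto_sum_nat.eventually (lt_mem_nhds (by linarith [he i]))
    obtain ⟨n, hn, hnM⟩ := (h1.and (eventually_ge_atTop (M k + 1))).exists
    obtain ⟨N, rfl⟩ : ∃ N, n = N + 1 := ⟨n - 1, by omega⟩
    have h2 : Tendsto (fun t => ∑ w ∈ Finset.range (N + 1), |p (s t) w - lam w|) atTop
        (𝓝 0) := by
      have := tendsto_finsetSum (Finset.range (N + 1)) fun w (_ : w ∈ Finset.range (N + 1)) =>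
        ((hlimw w).sub_const (lam w)).abs
      simpa using this
    obtain ⟨t, ht1, ht2⟩ := ((h2.eventually (gt_mem_nhds (he i))).and
      (eventually_ge_atTop (N + k + 1))).exists
    have hst : t ≤ s t := hsmono.id_le t
    exact ⟨N, s t, hmem _, by omega, by omega, by omega, ht1.le, by linarith⟩
  choose Nf kf hkL hlt hMN hNk hc ht using hstep
  let κ : ℕ → ℕ := fun i => Nat.rec (kf 0 0) (fun i k => kf (i + 1) k) i
  let prev : ℕ → ℕ := fun i => Nat.casesOn i 0 κ
  have hκ : ∀ i, κ i = kf i (prev i) := by rintro (_ | i) <;> rfl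
  refine ⟨lam, Λ, κ, fun i => Nf i (prev i), hlam0, hpart, hΛ1,
    strictMono_nat_of_lt_succ fun i => ?_, fun i => ?_, fun i => ?_, fun i => ?_, fun i => ?_,
    fun i => ht i _⟩
  · rw [hκ (i + 1)]; exact hlt (i + 1) (κ i)
  · rw [hκ]; exact hkL _ _
  · rw [hκ]; exact hNk _ _
  · exact hMN (i + 1) (κ i)
  · rw [hκ i]; exact hc _ _

/-- The one-step decomposition: after passing to an infinite set, `c k = b k + (1/2) c' k`, where
`c' k` is of the same kind as `c k` (it collects the first components) and the `b k` satisfy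
the upper estimate with constant `m_{j0} + δ`. -/
lemma one_step (P : IWParams) (f : ℕ → c00)
    (hbl : ∀ i j, i < j → Blocks (f i) (f j)) (c : ℕ → c00)
    (hc : ∀ k, c k ∈ convexHull ℝ (WSet P (f k).support)) (L : Set ℕ) (hL : L.Infinite)
    {δ : ℝ} (hδ : 0 < δ) :
    ∃ (L' : Set ℕ) (b c' : ℕ → c00), L' ⊆ L ∧ L'.Infinite ∧
      (∀ k, c' k ∈ convexHull ℝ (WSet P (f k).support)) ∧
      (∀ k ∈ L', c k = b k + (1 / 2 : ℝ) • c' k) ∧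
      ∀ (j0 : ℕ) (F : Finset ℕ), ↑F ⊆ L' →
        (F.image fun k => minSupp (f k)) ∈ Schreier (P.n j0) →
        ∀ x, iwNorm P x ≤ 1 → ∑ k ∈ F, evalAt x (b k) ≤ P.m j0 + δ := by
  classical
  obtain ⟨wt, g, r, hsplit⟩ := exists_weight_split P
  choose T a hT ha0 ha1 hac using fun k => exists_convex_rep (hc k)
  let p : ℕ → ℕ → ℝ := fun k w => ∑ z ∈ (T k).filter (fun z => wt z = w), a k z
  have hp0 : ∀ k w, 0 ≤ p k w := fun k w =>
    Finset.sum_nonneg fun z hz => ha0 k z (Finset.mem_filter.1 hz).1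
  -- The part of a sum over `T k` carried by the weights at most `N`, grouped by weight.
  have hgroup : ∀ (k N : ℕ) (v : c00 → ℝ),
      ∑ w ∈ Finset.range (N + 1), ∑ z ∈ (T k).filter (fun z => wt z = w), v z =
        ∑ z ∈ (T k).filter (fun z => wt z ≤ N), v z := by
    intro k N v
    rw [← Finset.sum_biUnion]
    · refine Finset.sum_congr ?_ fun _ _ => rfl
      ext z
      simp only [Finset.mem_biUnion, Finset.mem_range, Finset.mem_filter]
      constructor
      · rintro ⟨w, hw, hz, hwz⟩
        refine ⟨hz, ?_⟩
        rw [hwz]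
        exact_mod_cast Nat.lt_succ_iff.1 hw
      · rintro ⟨hz, hwz⟩
        obtain ⟨w, hw⟩ := ENat.ne_top_iff_exists.1 (ne_top_of_le_ne_top (ENat.natCast_ne_top N) hwz)
        refine ⟨w, ?_, hz, hw.symm⟩
        rw [← hw] at hwz
        exact Nat.lt_succ_iff.2 (by exact_mod_cast hwz)
    · intro w _ w' _ hww'
      refine Finset.disjoint_left.2 fun z hz hz' => hww' ?_
      have h1 := (Finset.mem_filter.1 hz).2
      have h2 := (Finset.mem_filter.1 hz').2
      exact_mod_cast h1.symm.trans h2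
  have hcompl : ∀ (k N : ℕ) (v : c00 → ℝ),
      ∑ w ∈ Finset.range (N + 1), ∑ z ∈ (T k).filter (fun z => wt z = w), v z +
        ∑ z ∈ (T k).filter (fun z => ¬ wt z ≤ N), v z = ∑ z ∈ T k, v z := by
    intro k N v
    rw [hgroup, Finset.sum_filter_add_sum_filter_not]
  have hp1 : ∀ k n, ∑ w ∈ Finset.range n, p k w ≤ 1 := by
    intro k n
    have h1 : ∑ w ∈ Finset.range n, p k w ≤ ∑ w ∈ Finset.range (n + 1), p k w :=
      Finset.sum_le_sum_of_subset_of_nonneg (Finset.range_subset_range.2 (by omega))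
        fun w _ _ => hp0 k w
    have h2 := hcompl k n (a k)
    have h3 : 0 ≤ ∑ z ∈ (T k).filter (fun z => ¬ wt z ≤ n), a k z :=
      Finset.sum_nonneg fun z hz => ha0 k z (Finset.mem_filter.1 hz).1
    rw [ha1 k] at h2
    exact h1.trans (by simp only [p]; linarith)
  obtain ⟨lam, Λ, κ, N, hlam, hpart, hΛ, hκ, hκL, hNκ, hMN, happ, htail⟩ :=
    exists_subsequence p hp0 hp1 L hL (fun k => maxSupp (f k))
      (fun i => δ / 12 * (1 / 2) ^ i) (fun i => by positivity)
  have hmono : StrictMono fun k => minSupp (f k) := fun i j hij => (hbl i j hij).minSupp_lt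
  have hNmin : ∀ i, N i ≤ minSupp (f (κ i)) := fun i => (hNκ i).trans (hmono.id_le _)
  let bz : ℕ → c00 → c00 := fun i z => if wt z ≤ N i then r z else z
  let yz : ℕ → c00 → c00 := fun i z =>
    if wt z ≤ N i then (2 / ((wt z).toNat : ℝ)) • g z else 0
  let b : ℕ → c00 := fun i => ∑ z ∈ T (κ i), a (κ i) z • bz i z
  let c' : ℕ → c00 := fun i => ∑ z ∈ T (κ i), a (κ i) z • yz i z
  have hfin : ∀ i z, wt z ≤ N i → ∃ w : ℕ, wt z = w := fun i z h => by
    obtain ⟨w, hw⟩ := ENat.ne_top_iff_exists.1 (ne_top_of_le_ne_top (ENat.natCast_ne_top _) h)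
    exact ⟨w, hw.symm⟩
  have hzero : ∀ k, (0 : c00) ∈ convexHull ℝ (WSet P (f k).support) := fun k =>
    subset_convexHull ℝ _ ⟨memWIW_zero P, by simp⟩
  have hc' : ∀ i, c' i ∈ convexHull ℝ (WSet P (f (κ i)).support) := by
    intro i
    refine (convex_convexHull ℝ _).sum_mem (ha0 _) (ha1 _) fun z hz => ?_
    have hzW := hT _ hz
    by_cases hwz : wt z ≤ N i
    · obtain ⟨w, hw⟩ := hfin i z hwz
      obtain ⟨h2, hg, hgs, -, -⟩ := (hsplit z hzW.1).2 w hw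
      have h2' : (2 : ℝ) ≤ w := by exact_mod_cast h2
      simp only [yz, if_pos hwz, hw, ENat.toNat_natCast]
      refine (convex_convexHull ℝ _).smul_mem_of_zero_mem (hzero _)
        (subset_convexHull ℝ _ ⟨hg, hgs.trans hzW.2⟩) ⟨by positivity, ?_⟩
      rw [div_le_one (by linarith)]
      exact h2'
    · simp only [yz, if_neg hwz]
      exact hzero _
  have hdec : ∀ i, c (κ i) = b i + (1 / 2 : ℝ) • c' i := by
    intro i
    rw [← hac (κ i), Finset.smul_sum, ← Finset.sum_add_distrib]
    refine Finset.sum_congr rfl fun z hz => ?_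
    rw [smul_comm, ← smul_add]
    congr 1
    by_cases hwz : wt z ≤ N i
    · obtain ⟨w, hw⟩ := hfin i z hwz
      obtain ⟨h2, -, -, heq, -⟩ := (hsplit z (hT _ hz).1).2 w hw
      simp only [bz, yz, if_pos hwz, hw, ENat.toNat_natCast]
      have hcoef : (1 / 2 : ℝ) * (2 / (w : ℝ)) = (w : ℝ)⁻¹ := by ring
      rw [smul_smul, hcoef]
      exact heq
    · simp only [bz, yz, if_neg hwz, smul_zero, add_zero]
  have hmain : ∀ (j0 : ℕ) (I : Finset ℕ),
      (I.image fun i => minSupp (f (κ i))) ∈ Schreier (P.n j0) →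
      ∀ x, iwNorm P x ≤ 1 → ∑ i ∈ I, evalAt x (b i) ≤ P.m j0 + δ := by
    intro j0 I hI x hx
    have hr2 : ∀ k, ∀ z ∈ T k, ∀ w : ℕ, wt z = w → |evalAt x (r z)| ≤ 2 := by
      intro k z hz w hw
      obtain ⟨h2, hg, -, heq, -⟩ := (hsplit z (hT _ hz).1).2 w hw
      have h1 := (hT _ hz).1.abs_le hx
      have h3 := hg.abs_le hx
      have hrz : evalAt x (r z) = evalAt x z - (w : ℝ)⁻¹ * evalAt x (g z) := by
        have := congrArg (evalAt x) heq
        rw [map_add, map_smul, smul_eq_mul] at this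
        linarith
      have hw1 : (w : ℝ)⁻¹ ≤ 1 := by
        refine inv_le_one_of_one_le₀ ?_
        exact_mod_cast (by omega : 1 ≤ w)
      have h4 : |(w : ℝ)⁻¹ * evalAt x (g z)| ≤ 1 := by
        rw [abs_mul, abs_of_nonneg (by positivity)]
        exact mul_le_one₀ hw1 (abs_nonneg _) h3
      rw [hrz]
      exact (abs_sub _ _).trans (by linarith)
    choose y hy2 hyle hy using fun i w : ℕ => exists_dominating
      ((T (κ i)).filter (fun z => wt z = w)) (a (κ i)) (fun z => evalAt x (r z))
      (fun z hz => ha0 _ z (Finset.mem_filter.1 hz).1)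
      (fun z hz => hr2 _ z (Finset.mem_filter.1 hz).1 w (Finset.mem_filter.1 hz).2)
    choose u hu2 hule hu using fun i : ℕ => exists_dominating
      ((T (κ i)).filter (fun z => ¬ wt z ≤ N i)) (a (κ i)) (fun z => evalAt x z)
      (fun z hz => ha0 _ z (Finset.mem_filter.1 hz).1)
      (fun z hz => ((hT _ (Finset.mem_filter.1 hz).1).1.abs_le hx).trans one_le_two)
    have hbound : ∀ i, evalAt x (b i) ≤ ∑ w ∈ Finset.range (N i + 1), p (κ i) w * y i w +
        (1 - ∑ w ∈ Finset.range (N i + 1), p (κ i) w) * u i := by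
      intro i
      have e1 : evalAt x (b i) = ∑ z ∈ T (κ i), a (κ i) z * evalAt x (bz i z) := by
        simp only [b, map_sum, map_smul, smul_eq_mul]
      have e2 : 1 - ∑ w ∈ Finset.range (N i + 1), p (κ i) w =
          ∑ z ∈ (T (κ i)).filter (fun z => ¬ wt z ≤ N i), a (κ i) z := by
        have := hcompl (κ i) (N i) (a (κ i))
        rw [ha1] at this
        simp only [p]
        linarith
      rw [e1, ← hcompl (κ i) (N i), e2]
      refine add_le_add (Finset.sum_le_sum fun w hw => ?_) ?_
      · refine le_trans (le_of_eq (Finset.sum_congr rfl fun z hz => ?_)) (hyle i w)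
        have hwz : wt z ≤ N i := by
          rw [(Finset.mem_filter.1 hz).2]
          exact_mod_cast Nat.lt_succ_iff.1 (Finset.mem_range.1 hw)
        simp only [bz, if_pos hwz]
      · refine le_trans (le_of_eq (Finset.sum_congr rfl fun z hz => ?_)) (hule i)
        simp only [bz, if_neg (Finset.mem_filter.1 hz).2]
    have hμ : ∀ i j, i < j → minSupp (f (κ i)) < minSupp (f (κ j)) :=
      fun i j hij => hmono (hκ hij)
    have hμA : ∀ i, ∀ t ∈ (f (κ i)).support, minSupp (f (κ i)) ≤ t :=
      fun i t ht => minSupp_le ht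
    have hA : ∀ i j, i < j → ∀ s ∈ (f (κ i)).support, ∀ t ∈ (f (κ j)).support, s < t :=
      fun i j hij s hs t ht => (hbl _ _ (hκ hij)).lt hs ht
    have hlo : ∀ i j, i < j → ∀ s ∈ (f (κ i)).support, s ≤ N j := by
      intro i j hij s hs
      obtain ⟨j, rfl⟩ : ∃ j', j = j' + 1 := ⟨j - 1, by omega⟩
      refine le_trans (le_maxSupp hs) (le_trans ?_ (hMN j))
      rcases (Nat.lt_succ_iff.1 hij).eq_or_lt with h | h
      · rw [h]
      · exact (hbl _ _ (hκ h)).le.trans (minSupp_le_maxSupp _)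
    have hY : ∀ w, ∑ i ∈ I, (if w ≤ N i then y i w else 0) ≤ P.m j0 := by
      intro w
      refine rest_sum_le hμ hμA hA hlo (Or.inr hI) (w := w) hx fun i _ => ?_
      by_cases hw : w ≤ N i
      · rw [if_pos hw]
        refine (hy i w).imp id ?_
        rintro ⟨z, hz, hyz⟩
        rw [Finset.mem_filter] at hz
        have hzW := hT _ hz.1
        exact ⟨r z, ((hsplit z hzW.1).2 w hz.2).2.2.2.2 _ _ hzW.2
          (fun t ht => (hNmin i).trans (minSupp_le ht)), hyz⟩
      · left; rw [if_neg hw]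
    have hU : ∑ i ∈ I, u i ≤ P.m j0 := by
      refine rest_sum_le hμ hμA hA hlo (Or.inr hI) (w := 1) hx fun i _ => ?_
      refine (hu i).imp id ?_
      rintro ⟨z, hz, huz⟩
      rw [Finset.mem_filter] at hz
      have hzW := hT _ hz.1
      exact ⟨z, Rest.of_large (hsplit z hzW.1).1 (not_le.1 hz.2) hzW.2, huz⟩
    have havg := averaging I N (fun i => p (κ i)) y lam u (fun i => δ / 12 * (1 / 2) ^ i) Λ
      (P.m j0) (Nat.cast_nonneg _) hlam hpart hΛ hy2 hu2 happ htail hY hU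
    have hgeo : ∑ i ∈ I, δ / 12 * (1 / 2 : ℝ) ^ i ≤ δ / 6 := by
      rw [← Finset.mul_sum]
      have := sum_le_hasSum I (fun i _ => by positivity) hasSum_geometric_two
      nlinarith
    have := (Finset.sum_le_sum fun i (_ : i ∈ I) => hbound i).trans havg
    linarith
  have hinv : ∀ i, Function.invFun κ (κ i) = i :=
    Function.leftInverse_invFun hκ.injective
  refine ⟨Set.range κ, fun k => b (Function.invFun κ k),
    fun k => if k ∈ Set.range κ then c' (Function.invFun κ k) else 0, ?_,
    Set.infinite_range_of_injective hκ.injective, ?_, ?_, ?_⟩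
  · rintro _ ⟨i, rfl⟩; exact hκL i
  · intro k
    beta_reduce
    by_cases hk : k ∈ Set.range κ
    · rw [if_pos hk]
      obtain ⟨i, rfl⟩ := hk
      rw [hinv]; exact hc' i
    · rw [if_neg hk]; exact hzero k
  · rintro _ ⟨i, rfl⟩
    beta_reduce
    rw [if_pos (Set.mem_range_self i), hinv]
    exact hdec i
  · intro j0 F hF hadm x hx
    obtain ⟨I, rfl⟩ : ∃ I : Finset ℕ, F = I.image κ := by
      refine ⟨F.image (Function.invFun κ), ?_⟩
      rw [Finset.image_image]
      symm
      refine (Finset.image_congr fun k hk => ?_).trans Finset.image_id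
      obtain ⟨i, rfl⟩ := hF hk
      simp [hinv]
    rw [Finset.sum_image fun i _ j _ h => hκ.injective h]
    simp only [hinv]
    refine hmain j0 I ?_ x hx
    rw [Finset.image_image] at hadm
    exact hadm

/-! ### Iteration and diagonalization -/

/-- Repeated application of `one_step`: nested infinite sets `L r` and successive remainders
`c r k`, each remainder losing a factor `1/2`. -/
lemma exists_iteration (P : IWParams) (f : ℕ → c00) (hbl : ∀ i j, i < j → Blocks (f i) (f j))
    (c₀ : ℕ → c00) (hc₀ : ∀ k, c₀ k ∈ convexHull ℝ (WSet P (f k).support)) {δ : ℝ}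
    (hδ : 0 < δ) :
    ∃ (L : ℕ → Set ℕ) (b c : ℕ → ℕ → c00), c 0 = c₀ ∧ Antitone L ∧ (∀ r, (L r).Infinite) ∧
      (∀ r k, c r k ∈ convexHull ℝ (WSet P (f k).support)) ∧
      (∀ r, ∀ k ∈ L (r + 1), c r k = b r k + (1 / 2 : ℝ) • c (r + 1) k) ∧
      ∀ (r j0 : ℕ) (F : Finset ℕ), ↑F ⊆ L (r + 1) →
        (F.image fun k => minSupp (f k)) ∈ Schreier (P.n j0) →
        ∀ x, iwNorm P x ≤ 1 → ∑ k ∈ F, evalAt x (b r k) ≤ P.m j0 + δ := by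
  let St := {s : Set ℕ × (ℕ → c00) //
    s.1.Infinite ∧ ∀ k, s.2 k ∈ convexHull ℝ (WSet P (f k).support)}
  have hstep := fun s : St => one_step P f hbl s.1.2 s.2.2 s.1.1 s.2.1 hδ
  choose L' b' c' hsub hinf hmem hdec hest using hstep
  let s : ℕ → St := fun r =>
    Nat.rec ⟨(Set.univ, c₀), Set.infinite_univ, hc₀⟩
      (fun _ t => ⟨(L' t, c' t), hinf t, hmem t⟩) r
  refine ⟨fun r => (s r).1.1, fun r => b' (s r), fun r => (s r).1.2, rfl,
    antitone_nat_of_succ_le fun r => hsub (s r), fun r => (s r).2.1, fun r => (s r).2.2,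
    fun r => hdec (s r), fun r => hest (s r)⟩

/-- Summing the first `R` levels of the iteration. -/
lemma iteration_expand {L : ℕ → Set ℕ} {b c : ℕ → ℕ → c00} (hL : Antitone L)
    (hdec : ∀ r, ∀ k ∈ L (r + 1), c r k = b r k + (1 / 2 : ℝ) • c (r + 1) k) (x : c00)
    (R k : ℕ) (hk : k ∈ L R) :
    evalAt x (c 0 k) = ∑ r ∈ Finset.range R, (1 / 2 : ℝ) ^ r * evalAt x (b r k)
      + (1 / 2 : ℝ) ^ R * evalAt x (c R k) := by
  induction R with
  | zero => simp
  | succ R ih =>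
    rw [ih (hL (Nat.le_succ R) hk), hdec R k hk, map_add, map_smul, Finset.sum_range_succ,
      smul_eq_mul]
    ring

/-- Along a diagonal sequence `l` (with `l i` in the `(i + R₀)`-th set of the iteration) the
levels `r` contribute at most `(1/2)^r (m_{j0} + δ)` each, hence at most `2 (m_{j0} + δ)`
altogether. -/
lemma diagonal_sum_le {P : IWParams} {f : ℕ → c00} {L : ℕ → Set ℕ} {b c : ℕ → ℕ → c00} {δ : ℝ}
    (hδ : 0 < δ) (hL : Antitone L)
    (hmem : ∀ r k, c r k ∈ convexHull ℝ (WSet P (f k).support))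
    (hdec : ∀ r, ∀ k ∈ L (r + 1), c r k = b r k + (1 / 2 : ℝ) • c (r + 1) k)
    (hest : ∀ (r j0 : ℕ) (F : Finset ℕ), ↑F ⊆ L (r + 1) →
        (F.image fun k => minSupp (f k)) ∈ Schreier (P.n j0) →
        ∀ x, iwNorm P x ≤ 1 → ∑ k ∈ F, evalAt x (b r k) ≤ P.m j0 + δ)
    {l : ℕ → ℕ} (hl : StrictMono l) {R₀ : ℕ} (hlL : ∀ i, l i ∈ L (i + R₀)) {j0 : ℕ}
    {I : Finset ℕ} (hI : ((I.image l).image fun k => minSupp (f k)) ∈ Schreier (P.n j0))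
    {x : c00} (hx : iwNorm P x ≤ 1) :
    ∑ i ∈ I, evalAt x (c 0 (l i)) ≤ 2 * (P.m j0 + δ) + 2 * (1 / 2 : ℝ) ^ R₀ := by
  classical
  rw [Finset.sum_congr rfl fun i _ => iteration_expand hL hdec x (i + R₀) (l i) (hlL i),
    Finset.sum_add_distrib]
  refine add_le_add ?_ ?_
  · obtain ⟨M, hM⟩ : ∃ M, ∀ i ∈ I, i + R₀ ≤ M :=
      ⟨I.sup id + R₀, fun i hi => Nat.add_le_add_right (Finset.le_sup (f := id) hi) R₀⟩
    rw [Finset.sum_comm' (t' := Finset.range M) (s' := fun r => I.filter fun i => r < i + R₀)]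
    · have hlev : ∀ r, ∑ i ∈ I.filter (fun i => r < i + R₀),
          (1 / 2 : ℝ) ^ r * evalAt x (b r (l i)) ≤ (1 / 2 : ℝ) ^ r * (P.m j0 + δ) := by
        intro r
        rw [← Finset.mul_sum]
        refine mul_le_mul_of_nonneg_left ?_ (by positivity)
        rw [← Finset.sum_image (f := fun k => evalAt x (b r k))
          (fun i _ j _ h => hl.injective h)]
        refine hest r j0 _ ?_ ?_ x hx
        · intro k hk
          obtain ⟨i, hi, rfl⟩ := Finset.mem_image.1 (Finset.mem_coe.1 hk)
          exact hL (Finset.mem_filter.1 hi).2 (hlL i)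
        · refine SchreierE.mem (P.one_le_n j0) (SchreierE.subset (Or.inr hI) ?_)
          exact Finset.image_subset_image (Finset.image_subset_image (Finset.filter_subset _ _))
      refine (Finset.sum_le_sum fun r _ => hlev r).trans ?_
      rw [← Finset.sum_mul]
      exact mul_le_mul_of_nonneg_right
        (sum_le_hasSum _ (fun i _ => by positivity) hasSum_geometric_two) (by positivity)
    · intro i r
      simp only [Finset.mem_range, Finset.mem_filter]
      exact ⟨fun h => ⟨⟨h.1, h.2⟩, h.2.trans_le (hM i h.1)⟩, fun h => h.1⟩
  · have hone : ∀ i ∈ I, (1 / 2 : ℝ) ^ (i + R₀) * evalAt x (c (i + R₀) (l i)) ≤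
        (1 / 2 : ℝ) ^ i * (1 / 2 : ℝ) ^ R₀ := by
      intro i _
      rw [← pow_add]
      exact mul_le_of_le_one_right (by positivity)
        ((le_abs_self _).trans (abs_evalAt_le_of_mem_convexHull (hmem _ _) hx))
    refine (Finset.sum_le_sum hone).trans ?_
    rw [← Finset.sum_mul]
    exact mul_le_mul_of_nonneg_right
      (sum_le_hasSum _ (fun i _ => by positivity) hasSum_geometric_two) (by positivity)

/-- `exists_convex_approx` with the error measured on the unit ball of `X_iw`. -/
lemma exists_convex_approx_evalAt {P : IWParams} {f : c00} (hf : iwDualNorm P f ≤ 1) {η : ℝ}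
    (hη : 0 < η) : ∃ c ∈ convexHull ℝ (WSet P f.support),
      ∀ x, iwNorm P x ≤ 1 → evalAt x f ≤ evalAt x c + η := by
  obtain ⟨c, hc, hfc⟩ := exists_convex_approx hf (η := η / (f.support.card + 1)) (by positivity)
  refine ⟨c, hc, fun x hx => ?_⟩
  rw [evalAt_eq_sum f x subset_rfl, evalAt_eq_sum c x (support_subset_of_mem_convexHull hc),
    ← sub_le_iff_le_add', ← Finset.sum_sub_distrib]
  have hterm : ∀ i ∈ f.support, f i * x i - c i * x i ≤ η / (f.support.card + 1) := by
    intro i _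
    rw [← sub_mul]
    refine (le_abs_self _).trans ?_
    rw [abs_mul]
    calc |f i - c i| * |x i| ≤ η / (f.support.card + 1) * 1 :=
          mul_le_mul (hfc i) (abs_apply_le_one hx i) (abs_nonneg _) (by positivity)
      _ = _ := mul_one _
  refine (Finset.sum_le_sum hterm).trans ?_
  rw [Finset.sum_const, nsmul_eq_mul, mul_div_assoc', div_le_iff₀ (by positivity)]
  nlinarith

/-- Let `(f_k)` be a block sequence in the unit ball of `X_iw^*`.
For every `ε > 0` there is an infinite `L ⊆ ℕ` such that for every `j₀` and every finite
`F ⊆ L` for which `(f_k)_{k∈F}` is `S_{n_{j₀}}`-admissible,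
`‖∑_{k∈F} f_k‖_* ≤ 2 m_{j₀} + ε`. -/
theorem statement16 (P : IWParams) (f : ℕ → c00)
    (hsupp : ∀ k, (f k).support.Nonempty)
    (hblock : ∀ k, Blocks (f k) (f (k + 1)))
    (hball : ∀ k, iwDualNorm P (f k) ≤ 1) (ε : ℝ) (hε : 0 < ε) :
    ∃ L : Set ℕ, L.Infinite ∧ ∀ j0 : ℕ, ∀ F : Finset ℕ, ↑F ⊆ L →
      (F.image fun k => minSupp (f k)) ∈ Schreier (P.n j0) →
      iwDualNorm P (∑ k ∈ F, f k) ≤ 2 * (P.m j0 : ℝ) + ε := by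
  classical
  have hbl : ∀ i j, i < j → Blocks (f i) (f j) := by
    intro i j hij
    induction j, hij using Nat.le_induction with
    | base => exact hblock i
    | succ j _ ih =>
      exact (ih.trans_le (minSupp_le_maxSupp _)).trans (hblock j)
  choose c₀ hc₀ happ using fun k => exists_convex_approx_evalAt (hball k)
    (η := ε / 8 * (1 / 2 : ℝ) ^ k) (by positivity)
  obtain ⟨L, b, c, hc0, hLa, hLinf, hmem, hdec, hest⟩ :=
    exists_iteration P f hbl c₀ hc₀ (δ := ε / 8) (by positivity)
  obtain ⟨R₀, hR₀⟩ := exists_pow_lt_of_lt_one (show 0 < ε / 8 by positivity)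
    (show (1 / 2 : ℝ) < 1 by norm_num)
  obtain ⟨l, hl, hlL⟩ := extraction_forall_of_frequently
    (P := fun i k => k ∈ L (i + R₀))
    fun i => Nat.frequently_atTop_iff_infinite.2 (hLinf (i + R₀))
  refine ⟨Set.range l, Set.infinite_range_of_injective hl.injective, fun j0 F hF hadm => ?_⟩
  obtain ⟨I, rfl⟩ : ∃ I : Finset ℕ, F = I.image l := by
    obtain ⟨I, hI⟩ := Finset.subset_set_image_iff.1 (Set.image_univ ▸ hF)
    exact ⟨I, hI.2.symm⟩
  refine iwDualNorm_le fun x hx => ?_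
  rw [map_sum]
  have herr : ∑ k ∈ I.image l, ε / 8 * (1 / 2 : ℝ) ^ k ≤ ε / 4 := by
    rw [← Finset.mul_sum]
    have := sum_le_hasSum (I.image l) (fun i _ => by positivity) hasSum_geometric_two
    nlinarith
  have hdiag := diagonal_sum_le (show 0 < ε / 8 by positivity) hLa hmem hdec hest hl hlL hadm hx
  rw [hc0, ← Finset.sum_image (f := fun k => evalAt x (c₀ k))
    (fun i _ j _ h => hl.injective h)] at hdiag
  have hsum := Finset.sum_le_sum fun k (_ : k ∈ I.image l) => happ k x hx
  rw [Finset.sum_add_distrib] at hsum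
  linarith
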